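/- arXiv:2201.00539 — 12 statements merged into one kernel-verified Lean document; each statement's English description precedes it below -/
import Mathlib

section
/- Let rk be a rank function satisfying (A1)–(A4) and the 3D line–plane intersection axiom (A10). If A, B, C and A', B', C' are points with rk{A,B,C} = 3 and rk{A',B',C'} = 3, then there exists a point M with rk{A,B,C,M} = 3 and rk{A',B',C',M} = 3; that is, the intersection of the two planes contains at least one point. -/
/-- With rank axioms (A1)–(A4) and the 3D line–plane intersection
axiom (A10), the intersection of two planes contains at least one point. -/
theorem stmt_1 {P : Type*} [DecidableEq P] (rk : Finset P → ℕ)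
    (hA1 : ∀ X : Finset P, rk X ≤ X.card)
    (hA2 : ∀ X Y : Finset P, X ⊆ Y → rk X ≤ rk Y)
    (hA3 : ∀ X Y : Finset P, rk (X ∪ Y) + rk (X ∩ Y) ≤ rk X + rk Y)
    (hA4 : ∀ p : P, rk {p} = 1)
    (hA10 : ∀ A B C A' B' : P, rk {A, B, C} = 3 → rk {A', B'} = 2 →
      ∃ M : P, rk {A, B, C, M} = 3 ∧ rk {A', B', M} = 2)
    (A B C A' B' C' : P)
    (hABC : rk {A, B, C} = 3)
    (hA'B'C' : rk {A', B', C'} = 3) :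
    ∃ M : P, rk {A, B, C, M} = 3 ∧ rk {A', B', C', M} = 3 := by
  have h2 : rk {A', B'} = 2 := by
    have h := hA3 {A', B'} {C'}
    have e : ({A', B'} : Finset P) ∪ {C'} = {A', B', C'} := by
      ext x; simp [or_assoc]
    rw [e, hA'B'C', hA4] at h
    have h' := hA1 {A', B'}
    have hc : ({A', B'} : Finset P).card ≤ 2 := Finset.card_le_two
    omega
  obtain ⟨M, hM1, hM2⟩ := hA10 A B C A' B' hABC h2
  refine ⟨M, hM1, le_antisymm ?_ ?_⟩
  · have h := hA3 {A', B', M} {A', B', C'}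
    have e : ({A', B', M} : Finset P) ∪ {A', B', C'} = {A', B', C', M} := by
      ext x; simp only [Finset.mem_union, Finset.mem_insert, Finset.mem_singleton]; tauto
    have hi := hA2 {A', B'} ({A', B', M} ∩ {A', B', C'}) (by
      intro x hx
      simp only [Finset.mem_inter, Finset.mem_insert, Finset.mem_singleton] at hx ⊢
      tauto)
    rw [e] at h
    omega
  · rw [← hA'B'C']
    apply hA2
    intro x hx
    simp only [Finset.mem_insert, Finset.mem_singleton] at hx ⊢
    tauto
end

section
/- Let rk be a rank function satisfying (A1)–(A4). If M, N, Q, A, B, C are points with rk{A,B,C} = 3, rk{A,B,M} = 2, rk{A,C,N} = 2 and rk{B,C,Q} = 2 (three points lying on the three edges of a nondegenerate triangle ABC), then rk{M,N,Q} ≥ 2; in particular at least two of the three points M, N, Q are distinct. -/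
/-- Three points lying on the three edges of a nondegenerate
triangle satisfy rk{M,N,Q} ≥ 2. -/
theorem stmt_2 {P : Type*} [DecidableEq P] (rk : Finset P → ℕ)
    (hA1 : ∀ X : Finset P, rk X ≤ X.card)
    (hA2 : ∀ X Y : Finset P, X ⊆ Y → rk X ≤ rk Y)
    (hA3 : ∀ X Y : Finset P, rk (X ∪ Y) + rk (X ∩ Y) ≤ rk X + rk Y)
    (hA4 : ∀ p : P, rk {p} = 1)
    (M N Q A B C : P)
    (hABC : rk {A, B, C} = 3)
    (hABM : rk {A, B, M} = 2)
    (hACN : rk {A, C, N} = 2)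
    (hBCQ : rk {B, C, Q} = 2) :
    2 ≤ rk {M, N, Q} := by
  have key : ∀ X Y Z W : Finset P, Z ⊆ X → Z ⊆ Y → W ⊆ X ∪ Y →
      rk W + rk Z ≤ rk X + rk Y := by
    intro X Y Z W h1 h2 h3
    have a := hA2 _ _ h3
    have b := hA2 _ _ (Finset.subset_inter h1 h2)
    have c := hA3 X Y
    omega
  by_contra hlt
  have hM := hA4 M
  have hN := hA4 N
  have hQ := hA4 Q
  have hC := hA4 C
  -- each edge still has rank at most 2 after adding M, N, Q
  have e1 := key {A, B, M} {M, N, Q} {M} {A, B, M, N, Q} (by clear * -; grind) (by clear * -; grind) (by clear * -; grind)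
  have e2 := key {A, C, N} {M, N, Q} {N} {A, C, M, N, Q} (by clear * -; grind) (by clear * -; grind) (by clear * -; grind)
  have e3 := key {B, C, Q} {M, N, Q} {Q} {B, C, M, N, Q} (by clear * -; grind) (by clear * -; grind) (by clear * -; grind)
  -- hence A and B both coincide in rank with M
  have e4 := key {A, B, M, N, Q} {A, C, M, N, Q} {A, M} {A, B, C}
    (by clear * -; grind) (by clear * -; grind) (by clear * -; grind)
  have e5 := key {A, B, M, N, Q} {B, C, M, N, Q} {B, M} {A, B, C}
    (by clear * -; grind) (by clear * -; grind) (by clear * -; grind)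
  have e6 := key {A, M} {B, M} {M} {A, B} (by clear * -; grind) (by clear * -; grind) (by clear * -; grind)
  have e7 := key {A, B} {C} ∅ {A, B, C} (by clear * -; grind) (by clear * -; grind) (by clear * -; grind)
  omega
end

section
/- Let rk be a rank function satisfying (A1)–(A4). If M, N, Q, A, B, C are points with rk{A,B,C} = 3, rk{A,B,M} = 2, rk{A,C,N} = 2, rk{B,C,Q} = 2 and additionally rk{A,M} = 2 (i.e. A ≠ M), then rk{A,C,M,N,Q} = 3. -/
/-- With the additional hypothesis A ≠ M (rk{A,M} = 2), one has
rk{A,C,M,N,Q} = 3. -/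
theorem stmt_4 {P : Type*} [DecidableEq P] (rk : Finset P → ℕ)
    (hA1 : ∀ X : Finset P, rk X ≤ X.card)
    (hA2 : ∀ X Y : Finset P, X ⊆ Y → rk X ≤ rk Y)
    (hA3 : ∀ X Y : Finset P, rk (X ∪ Y) + rk (X ∩ Y) ≤ rk X + rk Y)
    (hA4 : ∀ p : P, rk {p} = 1)
    (M N Q A B C : P)
    (hABC : rk {A, B, C} = 3)
    (hABM : rk {A, B, M} = 2)
    (hACN : rk {A, C, N} = 2)
    (hBCQ : rk {B, C, Q} = 2)
    (hAM : rk {A, M} = 2) :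
    rk {A, C, M, N, Q} = 3 := by
  have sub : ∀ X Y I U : Finset P, I ⊆ X → I ⊆ Y → U ⊆ X ∪ Y →
      rk U + rk I ≤ rk X + rk Y := by
    intro X Y I U h1 h2 h3
    have := hA3 X Y
    have := hA2 _ _ h3
    have := hA2 _ _ (Finset.subset_inter h1 h2)
    omega
  have hAC : rk {A, B, C} + rk ∅ ≤ rk {A, C} + rk {B} := by
    apply sub <;> intro x <;> simp <;> tauto
  have h1 : rk {A, B, C, M, Q} + rk {B} ≤ rk {A, B, M} + rk {B, C, Q} := by
    apply sub <;> intro x <;> simp <;> tauto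
  have h2 : rk {A, C, M, N, Q} + rk {A, C} ≤ rk {A, B, C, M, Q} + rk {A, C, N} := by
    apply sub <;> intro x <;> simp <;> tauto
  have h3 : rk {A, B, C} + rk {A, M} ≤ rk {A, B, M} + rk {A, C, M} := by
    apply sub <;> intro x <;> simp <;> tauto
  have h4 : rk {A, C, M} ≤ rk {A, C, M, N, Q} := by
    apply hA2; intro x; simp; tauto
  have hB := hA4 B
  omega
end

section
/- Let rk be a rank function satisfying (A1)–(A4) and the 3D line–plane intersection axiom (A10). If A, B, C and A', B', C' are points with rk{A,B,C} = 3 and rk{A',B',C'} = 3, then there exist two points M and N with rk{M,N} = 2 (so M ≠ N) such that rk{A,B,C,M} = 3, rk{A',B',C',M} = 3, rk{A,B,C,N} = 3 and rk{A',B',C',N} = 3; that is, the intersection of the two planes contains at least two distinct points. -/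
/-- With rank axioms (A1)–(A4) and the 3D line–plane intersection
axiom (A10), the intersection of two planes contains at least two distinct
points. -/
theorem stmt_5 {P : Type*} [DecidableEq P] (rk : Finset P → ℕ)
    (hA1 : ∀ X : Finset P, rk X ≤ X.card)
    (hA2 : ∀ X Y : Finset P, X ⊆ Y → rk X ≤ rk Y)
    (hA3 : ∀ X Y : Finset P, rk (X ∪ Y) + rk (X ∩ Y) ≤ rk X + rk Y)
    (hA4 : ∀ p : P, rk {p} = 1)
    (hA10 : ∀ A B C A' B' : P, rk {A, B, C} = 3 → rk {A', B'} = 2 →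
      ∃ M : P, rk {A, B, C, M} = 3 ∧ rk {A', B', M} = 2)
    (A B C A' B' C' : P)
    (hABC : rk {A, B, C} = 3)
    (hA'B'C' : rk {A', B', C'} = 3) :
    ∃ M N : P, rk {M, N} = 2 ∧
      rk {A, B, C, M} = 3 ∧ rk {A', B', C', M} = 3 ∧
      rk {A, B, C, N} = 3 ∧ rk {A', B', C', N} = 3 := by
  have sub : ∀ S T X Y : Finset P, S ⊆ X ∪ Y → T ⊆ X → T ⊆ Y →
      rk S + rk T ≤ rk X + rk Y := by
    intro S T X Y h1 h2 h3
    have := hA2 _ _ h1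
    have := hA2 _ _ (Finset.subset_inter h2 h3)
    have := hA3 X Y
    omega
  have pair : ∀ a b : P, rk {a, b} ≤ 2 := fun a b =>
    (hA1 _).trans Finset.card_le_two
  have edge : ∀ a b c : P, rk {a, b, c} = 3 → rk {a, b} = 2 := by
    intro a b c h
    have h1 := sub {a, b, c} ∅ {a, b} {c} (by intro x; simp <;> tauto) (by simp) (by simp)
    have h2 := hA4 c
    have h3 := pair a b
    omega
  -- a point on an edge of the triangle is in its plane
  have inpl : ∀ a b c m : P, rk {a, b, c} = 3 → rk {a, b, m} = 2 → rk {a, b, c, m} = 3 := by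
    intro a b c m h hm
    have h1 := sub {a, b, c, m} {a, b} {a, b, c} {a, b, m} (by intro x; simp <;> tauto)
      (by intro x; simp <;> tauto) (by intro x; simp <;> tauto)
    have h2 := edge a b c h
    have h3 := hA2 {a, b, c} {a, b, c, m} (by intro x; simp <;> tauto)
    omega
  have eAC : ({A', C', B'} : Finset P) = {A', B', C'} := by ext x; simp <;> tauto
  have eBC : ({B', C', A'} : Finset P) = {A', B', C'} := by ext x; simp <;> tauto
  have hAC : rk {A', C', B'} = 3 := by rw [eAC]; exact hA'B'C'
  have hBC : rk {B', C', A'} = 3 := by rw [eBC]; exact hA'B'C'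
  obtain ⟨M1, p1, l1⟩ := hA10 A B C A' B' hABC (edge _ _ _ hA'B'C')
  obtain ⟨M2, p2, l2⟩ := hA10 A B C A' C' hABC (edge _ _ _ hAC)
  obtain ⟨M3, p3, l3⟩ := hA10 A B C B' C' hABC (edge _ _ _ hBC)
  have q1 := inpl _ _ _ _ hA'B'C' l1
  have q2 : rk {A', B', C', M2} = 3 := by
    rw [show ({A', B', C', M2} : Finset P) = {A', C', B', M2} by ext x; simp <;> tauto]
    exact inpl _ _ _ _ hAC l2
  have q3 : rk {A', B', C', M3} = 3 := by
    rw [show ({A', B', C', M3} : Finset P) = {B', C', A', M3} by ext x; simp <;> tauto]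
    exact inpl _ _ _ _ hBC l3
  by_cases h12 : rk {M1, M2} = 2
  · exact ⟨M1, M2, h12, p1, q1, p2, q2⟩
  by_cases h13 : rk {M1, M3} = 2
  · exact ⟨M1, M3, h13, p1, q1, p3, q3⟩
  exfalso
  have r12 := pair M1 M2
  have r13 := pair M1 M3
  have a1 := hA4 M1
  have a2 := hA4 M2
  have a3 := hA4 M3
  have t2 := sub {A', C', M1} {M2} {A', C', M2} {M1, M2} (by intro x; simp <;> tauto)
    (by simp) (by simp)
  have t3 := sub {B', C', M1} {M3} {B', C', M3} {M1, M3} (by intro x; simp <;> tauto)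
    (by simp) (by simp)
  have u1 := sub {A', B', C'} {A', M1} {A', B', M1} {A', C', M1} (by intro x; simp <;> tauto)
    (by intro x; simp <;> tauto) (by intro x; simp <;> tauto)
  have u2 := sub {A', B', C'} {B', M1} {A', B', M1} {B', C', M1} (by intro x; simp <;> tauto)
    (by intro x; simp <;> tauto) (by intro x; simp <;> tauto)
  have u3 := sub {A', B', M1} {M1} {A', M1} {B', M1} (by intro x; simp <;> tauto)
    (by simp) (by simp)
  omega
end

section
/- Intersection of two planes in a 3D projective incidence space. Let rk be a rank function satisfying (A1)–(A4), the 3D upper-dimension axiom (A9): rk X ≤ 4 for every finite set X, and the 3D line–plane intersection axiom (A10). Let A, B, C, A', B', C' be points with rk{A,B,C} = 3, rk{A',B',C'} = 3 and rk{A,B,C,A',B',C'} = 4 (two distinct planes). Then there exist points M and N with rk{M,N} = 2, rk{A,B,C,M} = 3, rk{A',B',C',M} = 3, rk{A,B,C,N} = 3, rk{A',B',C',N} = 3, and such that for every point P one has rk{M,N,P} ≤ 2 if and only if rk{A,B,C,P} = 3 and rk{A',B',C',P} = 3; that is, the intersection of the two planes is exactly the line through M and N. -/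
theorem rk_sub_aux {P : Type*} [DecidableEq P] (rk : Finset P → ℕ)
    (hA2 : ∀ X Y : Finset P, X ⊆ Y → rk X ≤ rk Y)
    (hA3 : ∀ X Y : Finset P, rk (X ∪ Y) + rk (X ∩ Y) ≤ rk X + rk Y)
    (X Y U I : Finset P) (hU : ∀ x ∈ U, x ∈ X ∨ x ∈ Y) (hI : ∀ x ∈ I, x ∈ X ∧ x ∈ Y) :
    rk U + rk I ≤ rk X + rk Y := by
  have h1 := hA3 X Y
  have h2 := hA2 U (X ∪ Y) (fun x hx => Finset.mem_union.2 (hU x hx))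
  have h3 := hA2 I (X ∩ Y) (fun x hx => Finset.mem_inter.2 (hI x hx))
  omega

/-- In a 3D projective incidence space, the intersection of two
distinct planes is exactly a line. -/
theorem stmt_6 {P : Type*} [DecidableEq P] (rk : Finset P → ℕ)
    (hA1 : ∀ X : Finset P, rk X ≤ X.card)
    (hA2 : ∀ X Y : Finset P, X ⊆ Y → rk X ≤ rk Y)
    (hA3 : ∀ X Y : Finset P, rk (X ∪ Y) + rk (X ∩ Y) ≤ rk X + rk Y)
    (hA4 : ∀ p : P, rk {p} = 1)
    (hA9 : ∀ X : Finset P, rk X ≤ 4)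
    (hA10 : ∀ A B C A' B' : P, rk {A, B, C} = 3 → rk {A', B'} = 2 →
      ∃ M : P, rk {A, B, C, M} = 3 ∧ rk {A', B', M} = 2)
    (A B C A' B' C' : P)
    (hABC : rk {A, B, C} = 3)
    (hA'B'C' : rk {A', B', C'} = 3)
    (hdistinct : rk {A, B, C, A', B', C'} = 4) :
    ∃ M N : P, rk {M, N} = 2 ∧
      rk {A, B, C, M} = 3 ∧ rk {A', B', C', M} = 3 ∧
      rk {A, B, C, N} = 3 ∧ rk {A', B', C', N} = 3 ∧
      (∀ Q : P, rk {M, N, Q} ≤ 2 ↔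
        rk {A, B, C, Q} = 3 ∧ rk {A', B', C', Q} = 3) := by
  have sub := rk_sub_aux rk hA2 hA3
  have two : ∀ x y : P, rk {x, y} ≤ 2 := fun x y => (hA1 _).trans Finset.card_le_two
  have key : ∀ M N : P, rk {M, N} = 2 →
      rk {A, B, C, M} = 3 → rk {A', B', C', M} = 3 →
      rk {A, B, C, N} = 3 → rk {A', B', C', N} = 3 →
      ∃ M N : P, rk {M, N} = 2 ∧
      rk {A, B, C, M} = 3 ∧ rk {A', B', C', M} = 3 ∧
      rk {A, B, C, N} = 3 ∧ rk {A', B', C', N} = 3 ∧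
      (∀ Q : P, rk {M, N, Q} ≤ 2 ↔
        rk {A, B, C, Q} = 3 ∧ rk {A', B', C', Q} = 3) := by
    intro M N hMN h1 h2 h3 h4
    refine ⟨M, N, hMN, h1, h2, h3, h4, fun Q => ?_⟩
    have line : ∀ a b c : P, rk {a, b, c} = 3 → rk {a, b, c, M} = 3 → rk {a, b, c, N} = 3 →
        rk {M, N, Q} ≤ 2 → rk {a, b, c, Q} = 3 := by
      intro a b c h hM hN hQ
      have e1 := sub {a, b, c, M} {a, b, c, N} {a, b, c, M, N} {a, b, c} (by simp) (by simp)
      have e2 := sub {a, b, c, M, N} {M, N, Q} {a, b, c, Q} {M, N} (by simp) (by simp)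
      have e3 := hA2 {a, b, c} {a, b, c, Q} (by intro x; simp; tauto)
      omega
    have plane : ∀ a b c : P, rk {a, b, c} = 3 → rk {a, b, c, M} = 3 → rk {a, b, c, N} = 3 →
        rk {a, b, c, Q} = 3 → rk {a, b, c, M, N, Q} ≤ 3 := by
      intro a b c h hM hN hQ
      have e1 := sub {a, b, c, M} {a, b, c, N} {a, b, c, M, N} {a, b, c} (by simp) (by simp)
      have e2 := sub {a, b, c, M, N} {a, b, c, Q} {a, b, c, M, N, Q} {a, b, c} (by simp) (by simp)
      omega
    constructor
    · intro hQ
      exact ⟨line _ _ _ hABC h1 h3 hQ, line _ _ _ hA'B'C' h2 h4 hQ⟩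
    · rintro ⟨q1, q2⟩
      have p1 := plane _ _ _ hABC h1 h3 q1
      have p2 := plane _ _ _ hA'B'C' h2 h4 q2
      have e := sub {A, B, C, M, N, Q} {A', B', C', M, N, Q} {A, B, C, A', B', C'} {M, N, Q} (by simp) (by simp)
      omega
  have l1 : rk {A', B'} = 2 := by
    have := sub {A', B'} {C'} {A', B', C'} ∅ (by simp) (by simp)
    have := two A' B'
    have := hA4 C'
    omega
  have l2 : rk {A', C'} = 2 := by
    have := sub {A', C'} {B'} {A', B', C'} ∅ (by simp) (by simp)
    have := two A' C'
    have := hA4 B'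
    omega
  have l3 : rk {B', C'} = 2 := by
    have := sub {B', C'} {A'} {A', B', C'} ∅ (by simp) (by simp)
    have := two B' C'
    have := hA4 A'
    omega
  obtain ⟨M, m1, m2⟩ := hA10 A B C A' B' hABC l1
  obtain ⟨N, n1, n2⟩ := hA10 A B C A' C' hABC l2
  obtain ⟨R, r1, r2⟩ := hA10 A B C B' C' hABC l3
  have up : ∀ x : P, rk {A', B', C'} ≤ rk {A', B', C', x} := fun x =>
    hA2 _ _ (by intro x; simp; tauto)
  have m3 : rk {A', B', C', M} = 3 := by
    have := sub {A', B', M} {A', B', C'} {A', B', C', M} {A', B'} (by simp) (by simp)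
    have := up M
    omega
  have n3 : rk {A', B', C', N} = 3 := by
    have := sub {A', C', N} {A', B', C'} {A', B', C', N} {A', C'} (by simp) (by simp)
    have := up N
    omega
  have r3 : rk {A', B', C', R} = 3 := by
    have := sub {B', C', R} {A', B', C'} {A', B', C', R} {B', C'} (by simp) (by simp)
    have := up R
    omega
  by_cases hMN : rk {M, N} = 2
  · exact key M N hMN m1 m3 n1 n3
  by_cases hMR : rk {M, R} = 2
  · exact key M R hMR m1 m3 r1 r3
  exfalso
  have t1 := two M N
  have t2 := two M R
  have s1 := hA4 M
  have s2 := hA4 N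
  have s3 := hA4 R
  have e1 := sub {A', C', N} {M, N} {A', C', M} {N} (by simp) (by simp)
  have e2 := sub {B', C', R} {M, R} {B', C', M} {R} (by simp) (by simp)
  have e3 := sub {A', B', M} {A', C', M} {A', B', C'} {A', M} (by simp) (by simp)
  have e4 := sub {A', B', M} {B', C', M} {A', B', C'} {B', M} (by simp) (by simp)
  have e5 := sub {A', M} {B', M} {A', B'} {M} (by simp) (by simp)
  omega
end

section
/- Let rk be a rank function satisfying (A1)–(A3). Let A, B, C, A', B', C', M, N, P be points with rk{A,B,C} = 3, rk{A',B',C'} = 3, rk{A,B,C,A',B',C'} = 4, rk{A,B,C,M} = 3, rk{A,B,C,N} = 3, rk{A,B,C,P} = 3, rk{A',B',C',M} = 3, rk{A',B',C',N} = 3, rk{A',B',C',P} = 3 and rk{M,N} = 2. Then rk{M,N,P} = 2; that is, the intersection of two distinct planes in a 3D space is contained in the line spanned by two of its distinct points M and N. -/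
/-- The intersection of two distinct planes in a 3D space is
contained in the line spanned by two of its distinct points M and N. -/
theorem stmt_7 {P : Type*} [DecidableEq P] (rk : Finset P → ℕ)
    (hA1 : ∀ X : Finset P, rk X ≤ X.card)
    (hA2 : ∀ X Y : Finset P, X ⊆ Y → rk X ≤ rk Y)
    (hA3 : ∀ X Y : Finset P, rk (X ∪ Y) + rk (X ∩ Y) ≤ rk X + rk Y)
    (A B C A' B' C' M N Q : P)
    (hABC : rk {A, B, C} = 3)
    (hA'B'C' : rk {A', B', C'} = 3)
    (hdistinct : rk {A, B, C, A', B', C'} = 4)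
    (hM1 : rk {A, B, C, M} = 3)
    (hN1 : rk {A, B, C, N} = 3)
    (hQ1 : rk {A, B, C, Q} = 3)
    (hM2 : rk {A', B', C', M} = 3)
    (hN2 : rk {A', B', C', N} = 3)
    (hQ2 : rk {A', B', C', Q} = 3)
    (hMN : rk {M, N} = 2) :
    rk {M, N, Q} = 2 := by
  have key : ∀ X Y U I : Finset P, U ⊆ X ∪ Y → I ⊆ X ∩ Y → rk U + rk I ≤ rk X + rk Y := by
    intro X Y U I hU hI
    have h1 := hA2 _ _ hU
    have h2 := hA2 _ _ hI
    have h3 := hA3 X Y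
    omega
  have plane : ∀ a b c : P, rk {a, b, c} = 3 → rk {a, b, c, M} = 3 → rk {a, b, c, N} = 3 →
      rk {a, b, c, Q} = 3 → rk {a, b, c, M, N, Q} ≤ 3 := by
    intro a b c h hM hN hQ
    have h1 := key {a, b, c, M} {a, b, c, N} {a, b, c, M, N} {a, b, c}
      (by intro x; simp <;> tauto) (by intro x; simp <;> tauto)
    have h2 := key {a, b, c, M, N} {a, b, c, Q} {a, b, c, M, N, Q} {a, b, c}
      (by intro x; simp <;> tauto) (by intro x; simp <;> tauto)
    omega
  have p1 := plane A B C hABC hM1 hN1 hQ1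
  have p2 := plane A' B' C' hA'B'C' hM2 hN2 hQ2
  have h := key {A, B, C, M, N, Q} {A', B', C', M, N, Q} {A, B, C, A', B', C'} {M, N, Q}
    (by intro x; simp <;> tauto) (by intro x; simp <;> tauto)
  have hl := hA2 {M, N} {M, N, Q} (by intro x; simp <;> tauto)
  omega
end

section
/- Let rk be a rank function satisfying (A1)–(A3). Let A, B, C, A', B', C', M, N, P be points with rk{A,B,C} = 3, rk{A',B',C'} = 3, rk{A,B,C,A',B',C'} = 4, rk{A,B,C,M} = 3, rk{A,B,C,N} = 3, rk{A',B',C',M} = 3, rk{A',B',C',N} = 3, rk{M,N} = 2 and rk{M,N,P} = 2. Then rk{A,B,C,P} = 3 and rk{A',B',C',P} = 3; that is, the line through M and N is contained in the intersection of the two planes. -/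
theorem plane_aux {P : Type*} [DecidableEq P] (rk : Finset P → ℕ)
    (hA2 : ∀ X Y : Finset P, X ⊆ Y → rk X ≤ rk Y)
    (hA3 : ∀ X Y : Finset P, rk (X ∪ Y) + rk (X ∩ Y) ≤ rk X + rk Y)
    (A B C M N Q : P)
    (hABC : rk {A, B, C} = 3)
    (hM1 : rk {A, B, C, M} = 3)
    (hN1 : rk {A, B, C, N} = 3)
    (hMN : rk {M, N} = 2)
    (hMNQ : rk {M, N, Q} = 2) :
    rk {A, B, C, Q} = 3 := by
  have key : ∀ X Y Z W : Finset P, Z ⊆ X ∩ Y → W ⊆ X ∪ Y → rk W + rk Z ≤ rk X + rk Y := by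
    intro X Y Z W h1 h2
    have := hA2 _ _ h1
    have := hA2 _ _ h2
    have := hA3 X Y
    omega
  have h1 := key {A, B, C, M} {A, B, C, N} {A, B, C} {A, B, C, M, N}
    (by intro x; simp <;> tauto) (by intro x; simp <;> tauto)
  have h2 := key {A, B, C, M, N} {M, N, Q} {M, N} {A, B, C, Q}
    (by intro x; simp <;> tauto) (by intro x; simp <;> tauto)
  have h3 := hA2 {A, B, C} {A, B, C, Q} (by intro x; simp <;> tauto)
  omega

/-- The line through two distinct common points M and N of two
distinct planes in a 3D space is contained in the intersection of the planes. -/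
theorem stmt_8 {P : Type*} [DecidableEq P] (rk : Finset P → ℕ)
    (hA1 : ∀ X : Finset P, rk X ≤ X.card)
    (hA2 : ∀ X Y : Finset P, X ⊆ Y → rk X ≤ rk Y)
    (hA3 : ∀ X Y : Finset P, rk (X ∪ Y) + rk (X ∩ Y) ≤ rk X + rk Y)
    (A B C A' B' C' M N Q : P)
    (hABC : rk {A, B, C} = 3)
    (hA'B'C' : rk {A', B', C'} = 3)
    (hdistinct : rk {A, B, C, A', B', C'} = 4)
    (hM1 : rk {A, B, C, M} = 3)
    (hN1 : rk {A, B, C, N} = 3)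
    (hM2 : rk {A', B', C', M} = 3)
    (hN2 : rk {A', B', C', N} = 3)
    (hMN : rk {M, N} = 2)
    (hMNQ : rk {M, N, Q} = 2) :
    rk {A, B, C, Q} = 3 ∧ rk {A', B', C', Q} = 3 := by
  exact ⟨plane_aux rk hA2 hA3 A B C M N Q hABC hM1 hN1 hMN hMNQ,
    plane_aux rk hA2 hA3 A' B' C' M N Q hA'B'C' hM2 hN2 hMN hMNQ⟩
end

section
/- Desargues' theorem, non-coplanar configuration. Let rk be a rank function satisfying (A1)–(A4) and rk X ≤ 4 for every finite set X. Let O, A, B, C, A', B', C', α, β, γ be points such that: rk{A,B,C} = 3 and rk{A',B',C'} = 3 (two nondegenerate triangles); rk{A,B,C,A',B',C'} = 4 (the triangles are not coplanar); the triangles are in perspective from O, i.e. rk{O,A,A'} = 2, rk{O,B,B'} = 2, rk{O,C,C'} = 2, with rk{O,A} = 2, rk{O,B} = 2, rk{O,C} = 2, rk{O,A'} = 2, rk{O,B'} = 2, rk{O,C'} = 2, rk{A,A'} = 2, rk{B,B'} = 2, rk{C,C'} = 2; and the corresponding sides meet in α, β, γ, i.e. rk{B,C,α} = 2 and rk{B',C',α}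 = 2, rk{A,C,β} = 2 and rk{A',C',β} = 2, rk{A,B,γ} = 2 and rk{A',B',γ} = 2. Then rk{α,β,γ} ≤ 2, i.e. the three points α, β, γ are collinear. -/
/-- Submodularity in a convenient form. -/
theorem rk_submod_aux {Pt : Type*} [DecidableEq Pt] (rk : Finset Pt → ℕ)
    (hA2 : ∀ X Y : Finset Pt, X ⊆ Y → rk X ≤ rk Y)
    (hA3 : ∀ X Y : Finset Pt, rk (X ∪ Y) + rk (X ∩ Y) ≤ rk X + rk Y)
    (X Y Z I : Finset Pt) (hZ : Z ⊆ X ∪ Y) (hX : I ⊆ X) (hY : I ⊆ Y) :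
    rk Z + rk I ≤ rk X + rk Y := by
  have h1 := hA2 _ _ hZ
  have h2 := hA2 _ _ (Finset.subset_inter hX hY)
  have h3 := hA3 X Y
  omega

/-- The points on the sides of a triangle lie in its plane. -/
theorem rk_triangle_aux {Pt : Type*} [DecidableEq Pt] (rk : Finset Pt → ℕ)
    (hA2 : ∀ X Y : Finset Pt, X ⊆ Y → rk X ≤ rk Y)
    (hA3 : ∀ X Y : Finset Pt, rk (X ∪ Y) + rk (X ∩ Y) ≤ rk X + rk Y)
    (hA4 : ∀ p : Pt, rk {p} = 1)
    (A B C α β γ : Pt) (hABC : rk {A, B, C} = 3)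
    (hα : rk {B, C, α} = 2) (hβ : rk {A, C, β} = 2) (hγ : rk {A, B, γ} = 2) :
    rk {A, B, C, α, β, γ} ≤ 3 := by
  have key := rk_submod_aux rk hA2 hA3
  have a := key {A} {B, C} {A, B, C} ∅ (by intro x; simp only [Finset.mem_union, Finset.mem_insert, Finset.mem_singleton]; tauto) (by simp) (by simp)
  have b := key {B} {A, C} {A, B, C} ∅ (by intro x; simp only [Finset.mem_union, Finset.mem_insert, Finset.mem_singleton]; tauto) (by simp) (by simp)
  have c := key {C} {A, B} {A, B, C} ∅ (by intro x; simp only [Finset.mem_union, Finset.mem_insert, Finset.mem_singleton]; tauto) (by simp) (by simp)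
  rw [hA4] at a b c
  have d := key {A, B, C} {B, C, α} {A, B, C, α} {B, C} (by intro x; simp only [Finset.mem_union, Finset.mem_insert, Finset.mem_singleton]; tauto) (by intro x; simp only [Finset.mem_union, Finset.mem_insert, Finset.mem_singleton]; tauto) (by intro x; simp only [Finset.mem_union, Finset.mem_insert, Finset.mem_singleton]; tauto)
  have e := key {A, B, C, α} {A, C, β} {A, B, C, α, β} {A, C} (by intro x; simp only [Finset.mem_union, Finset.mem_insert, Finset.mem_singleton]; tauto) (by intro x; simp only [Finset.mem_union, Finset.mem_insert, Finset.mem_singleton]; tauto) (by intro x; simp only [Finset.mem_union, Finset.mem_insert, Finset.mem_singleton]; tauto)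
  have f := key {A, B, C, α, β} {A, B, γ} {A, B, C, α, β, γ} {A, B}
    (by intro x; simp only [Finset.mem_union, Finset.mem_insert, Finset.mem_singleton]; tauto) (by intro x; simp only [Finset.mem_union, Finset.mem_insert, Finset.mem_singleton]; tauto) (by intro x; simp only [Finset.mem_union, Finset.mem_insert, Finset.mem_singleton]; tauto)
  omega

/-- Desargues' theorem, non-coplanar configuration: two triangles
in perspective from a point O, not coplanar, have their corresponding sides
meeting in three collinear points α, β, γ. -/
theorem stmt_9 {Pt : Type*} [DecidableEq Pt] (rk : Finset Pt → ℕ)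
    (hA1 : ∀ X : Finset Pt, rk X ≤ X.card)
    (hA2 : ∀ X Y : Finset Pt, X ⊆ Y → rk X ≤ rk Y)
    (hA3 : ∀ X Y : Finset Pt, rk (X ∪ Y) + rk (X ∩ Y) ≤ rk X + rk Y)
    (hA4 : ∀ p : Pt, rk {p} = 1)
    (hA9 : ∀ X : Finset Pt, rk X ≤ 4)
    (O A B C A' B' C' α β γ : Pt)
    (hABC : rk {A, B, C} = 3)
    (hA'B'C' : rk {A', B', C'} = 3)
    (hncop : rk {A, B, C, A', B', C'} = 4)
    (hOAA' : rk {O, A, A'} = 2) (hOBB' : rk {O, B, B'} = 2) (hOCC' : rk {O, C, C'} = 2)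
    (hOA : rk {O, A} = 2) (hOB : rk {O, B} = 2) (hOC : rk {O, C} = 2)
    (hOA' : rk {O, A'} = 2) (hOB' : rk {O, B'} = 2) (hOC' : rk {O, C'} = 2)
    (hAA' : rk {A, A'} = 2) (hBB' : rk {B, B'} = 2) (hCC' : rk {C, C'} = 2)
    (hα : rk {B, C, α} = 2) (hα' : rk {B', C', α} = 2)
    (hβ : rk {A, C, β} = 2) (hβ' : rk {A', C', β} = 2)
    (hγ : rk {A, B, γ} = 2) (hγ' : rk {A', B', γ} = 2) :
    rk {α, β, γ} ≤ 2 := by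
  have h1 := rk_triangle_aux rk hA2 hA3 hA4 A B C α β γ hABC hα hβ hγ
  have h2 := rk_triangle_aux rk hA2 hA3 hA4 A' B' C' α β γ hA'B'C' hα' hβ' hγ'
  have h3 := rk_submod_aux rk hA2 hA3 {A, B, C, α, β, γ} {A', B', C', α, β, γ}
    {A, B, C, A', B', C'} {α, β, γ} (by intro x; simp only [Finset.mem_union, Finset.mem_insert, Finset.mem_singleton]; tauto) (by intro x; simp only [Finset.mem_union, Finset.mem_insert, Finset.mem_singleton]; tauto) (by intro x; simp only [Finset.mem_union, Finset.mem_insert, Finset.mem_singleton]; tauto)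
  omega
end

section
/- Desargues' theorem in dimension 3 for tetrahedra. Let rk be a rank function satisfying (A1)–(A4) and rk X ≤ 4 for every finite set X. Let O; A, B, C, D; A', B', C', D' be points with rk{A,B,C,D} = 4 and rk{A',B',C',D'} = 4 (two tetrahedra), in perspective from O: for each pair (X,X') among (A,A'), (B,B'), (C,C'), (D,D') one has rk{O,X,X'} = 2, rk{O,X} = 2, rk{O,X'} = 2, rk{X,X'} = 2; and O is independent of each tetrahedron, i.e. rk{O,X,Y,Z} = 4 for every three distinct vertices X, Y, Z of {A,B,C,D} and of {A',B',C',D'}. Let P_AB, P_AC, P_AD, P_BC, P_BD, P_CD be points such that for each pair (X,Y) of distinct vertices, rk{X,Y,P_XY} = 2 and rk{X',Y',P_XY} = 2 (P_XY is the intersection of corresponding edges). Then rk{P_AB, P_AC, P_AD, P_BC, P_BD, P_CD} = 3 (the six points lie in a common plane) and for each face {X,Y,Z} of the tetrahedron (i.e. each of the four 3-element subsets of {A,B,C,D}) one has rk{P_XY, P_XZ, P_YZ} ≤ 2; that is, the six points form a complete quadrilateral. -/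
/-- A point in the closure of `S` is in the closure of every larger set. -/
theorem d_ext {Pt : Type*} [DecidableEq Pt] (rk : Finset Pt → ℕ)
    (hA2 : ∀ X Y : Finset Pt, X ⊆ Y → rk X ≤ rk Y)
    (hA3 : ∀ X Y : Finset Pt, rk (X ∪ Y) + rk (X ∩ Y) ≤ rk X + rk Y)
    (z : Pt) (S T : Finset Pt) (h : rk (insert z S) ≤ rk S) (hST : S ⊆ T) :
    rk (insert z T) ≤ rk T := by
  have h1 := hA3 (insert z S) T
  have h2 := hA2 S (insert z S ∩ T) (by grind)
  have h3 := hA2 (insert z T) (insert z S ∪ T) (by grind)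
  omega

/-- A point on the line `xy` can be added to a set containing `x, y`. -/
theorem d_step {Pt : Type*} [DecidableEq Pt] (rk : Finset Pt → ℕ)
    (hA2 : ∀ X Y : Finset Pt, X ⊆ Y → rk X ≤ rk Y)
    (hA3 : ∀ X Y : Finset Pt, rk (X ∪ Y) + rk (X ∩ Y) ≤ rk X + rk Y)
    (x y z : Pt) (T : Finset Pt) (h2 : 2 ≤ rk {x, y}) (h : rk {x, y, z} ≤ 2)
    (hx : x ∈ T) (hy : y ∈ T) : rk (insert z T) ≤ rk T := by
  apply d_ext rk hA2 hA3 z {x, y} T _ (by grind)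
  have := hA2 (insert z {x, y}) {x, y, z} (by grind)
  omega

theorem d_ins {Pt : Type*} [DecidableEq Pt] (rk : Finset Pt → ℕ)
    (hA3 : ∀ X Y : Finset Pt, rk (X ∪ Y) + rk (X ∩ Y) ≤ rk X + rk Y)
    (hA4 : ∀ p : Pt, rk {p} = 1)
    (z : Pt) (T : Finset Pt) : rk (insert z T) ≤ rk T + 1 := by
  have h1 := hA3 {z} T
  rw [hA4, ← Finset.insert_eq] at h1
  omega

theorem d_drop2 {Pt : Type*} [DecidableEq Pt] (rk : Finset Pt → ℕ)
    (hA2 : ∀ X Y : Finset Pt, X ⊆ Y → rk X ≤ rk Y)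
    (hA3 : ∀ X Y : Finset Pt, rk (X ∪ Y) + rk (X ∩ Y) ≤ rk X + rk Y)
    (hA4 : ∀ p : Pt, rk {p} = 1)
    (x y : Pt) (S T : Finset Pt) (hS : rk S = 4) (h : S ⊆ insert x (insert y T)) :
    2 ≤ rk T := by
  have h1 := d_ins rk hA3 hA4 x (insert y T)
  have h2 := d_ins rk hA3 hA4 y T
  have h3 := hA2 _ _ h
  omega

/-- Two triangles in perspective, not coplanar with the centre. -/
theorem d_face {Pt : Type*} [DecidableEq Pt] (rk : Finset Pt → ℕ)
    (hA1 : ∀ X : Finset Pt, rk X ≤ X.card)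
    (hA2 : ∀ X Y : Finset Pt, X ⊆ Y → rk X ≤ rk Y)
    (hA3 : ∀ X Y : Finset Pt, rk (X ∪ Y) + rk (X ∩ Y) ≤ rk X + rk Y)
    (hA4 : ∀ p : Pt, rk {p} = 1)
    (O A B C A' B' C' P Q R : Pt)
    (hOAA' : rk {O, A, A'} = 2) (hAA' : rk {A, A'} = 2)
    (hO : rk {O, A, B, C} = 4) (hO' : rk {O, A', B', C'} = 4)
    (hP : rk {A, B, P} = 2) (hP' : rk {A', B', P} = 2)
    (hQ : rk {A, C, Q} = 2) (hQ' : rk {A', C', Q} = 2)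
    (hR : rk {B, C, R} = 2) (hR' : rk {B', C', R} = 2) :
    rk {P, Q, R} ≤ 2 := by
  have key : ∀ U V W : Pt, rk {O, U, V, W} = 4 → rk {U, V, P} = 2 → rk {U, W, Q} = 2 →
      rk {V, W, R} = 2 → rk {P, Q, R, U, V, W} ≤ 3 := by
    intro U V W h hp hq hr
    have e1 := d_drop2 rk hA2 hA3 hA4 O W {O, U, V, W} {U, V} h (by
    clear * -; intro x hx
    simp only [Finset.mem_insert, Finset.mem_singleton, Finset.mem_union, Finset.mem_inter] at hx ⊢
    tauto)
    have e2 := d_drop2 rk hA2 hA3 hA4 O V {O, U, V, W} {U, W} h (by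
    clear * -; intro x hx
    simp only [Finset.mem_insert, Finset.mem_singleton, Finset.mem_union, Finset.mem_inter] at hx ⊢
    tauto)
    have e3 := d_drop2 rk hA2 hA3 hA4 O U {O, U, V, W} {V, W} h (by
    clear * -; intro x hx
    simp only [Finset.mem_insert, Finset.mem_singleton, Finset.mem_union, Finset.mem_inter] at hx ⊢
    tauto)
    have s1 := d_step rk hA2 hA3 V W R {U, V, W} e3 hr.le (by simp) (by simp)
    have s2 := d_step rk hA2 hA3 U W Q {R, U, V, W} e2 hq.le (by simp) (by simp)
    have s3 := d_step rk hA2 hA3 U V P {Q, R, U, V, W} e1 hp.le (by simp) (by simp)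
    have c := (hA1 {U, V, W}).trans Finset.card_le_three
    omega
  have k1 := key A B C hO hP hQ hR
  have k2 := key A' B' C' hO' hP' hQ' hR'
  have k3 := hA3 {P, Q, R, A, B, C} {P, Q, R, A', B', C'}
  have k4 := hA2 {P, Q, R} ({P, Q, R, A, B, C} ∩ {P, Q, R, A', B', C'}) (by
    clear * -; intro x hx
    simp only [Finset.mem_insert, Finset.mem_singleton, Finset.mem_union, Finset.mem_inter] at hx ⊢
    tauto)
  have hl := hA2 {A, A', O} {O, A, A'} (by
    clear * -; intro x hx
    simp only [Finset.mem_insert, Finset.mem_singleton, Finset.mem_union, Finset.mem_inter] at hx ⊢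
    tauto)
  have k5 := d_step rk hA2 hA3 A A' O ({P, Q, R, A, B, C} ∪ {P, Q, R, A', B', C'})
    hAA'.ge (by omega) (by simp) (by simp)
  have k6 := hA2 {O, A, B, C} (insert O ({P, Q, R, A, B, C} ∪ {P, Q, R, A', B', C'})) (by
    clear * -; intro x hx
    simp only [Finset.mem_insert, Finset.mem_singleton, Finset.mem_union, Finset.mem_inter] at hx ⊢
    tauto)
  omega

/-- The intersection point of corresponding edges is not a vertex. -/
theorem d_vert {Pt : Type*} [DecidableEq Pt] (rk : Finset Pt → ℕ)
    (hA2 : ∀ X Y : Finset Pt, X ⊆ Y → rk X ≤ rk Y)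
    (hA3 : ∀ X Y : Finset Pt, rk (X ∪ Y) + rk (X ∩ Y) ≤ rk X + rk Y)
    (hA4 : ∀ p : Pt, rk {p} = 1)
    (O A A' B' C' P : Pt)
    (hOAA' : rk {O, A, A'} = 2) (hAA' : rk {A, A'} = 2)
    (hO' : rk {O, A', B', C'} = 4) (hP' : rk {A', B', P} = 2) :
    2 ≤ rk {A, P} := by
  by_contra hc
  have h1 := d_ext rk hA2 hA3 A {P} {A', B', P} (by rw [hA4]; omega) (by
    clear * -; intro x hx
    simp only [Finset.mem_insert, Finset.mem_singleton, Finset.mem_union, Finset.mem_inter] at hx ⊢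
    tauto)
  have hl := hA2 {A, A', O} {O, A, A'} (by
    clear * -; intro x hx
    simp only [Finset.mem_insert, Finset.mem_singleton, Finset.mem_union, Finset.mem_inter] at hx ⊢
    tauto)
  have h2 := d_step rk hA2 hA3 A A' O {A, A', B', P} hAA'.ge (by omega) (by simp) (by simp)
  have h3 := d_ins rk hA3 hA4 C' {O, A, A', B', P}
  have h4 := hA2 {O, A', B', C'} {C', O, A, A', B', P} (by
    clear * -; intro x hx
    simp only [Finset.mem_insert, Finset.mem_singleton, Finset.mem_union, Finset.mem_inter] at hx ⊢
    tauto)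
  omega

/-- Desargues' theorem in dimension 3 for tetrahedra: the six
intersection points of corresponding edges of two tetrahedra in perspective
from a point lie in a common plane and form a complete quadrilateral. -/
theorem stmt_11 {Pt : Type*} [DecidableEq Pt] (rk : Finset Pt → ℕ)
    (hA1 : ∀ X : Finset Pt, rk X ≤ X.card)
    (hA2 : ∀ X Y : Finset Pt, X ⊆ Y → rk X ≤ rk Y)
    (hA3 : ∀ X Y : Finset Pt, rk (X ∪ Y) + rk (X ∩ Y) ≤ rk X + rk Y)
    (hA4 : ∀ p : Pt, rk {p} = 1)
    (hA9 : ∀ X : Finset Pt, rk X ≤ 4)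
    (O A B C D A' B' C' D' : Pt)
    (P_AB P_AC P_AD P_BC P_BD P_CD : Pt)
    -- the two tetrahedra
    (hT : rk {A, B, C, D} = 4)
    (hT' : rk {A', B', C', D'} = 4)
    -- perspective from O
    (hOAA' : rk {O, A, A'} = 2) (hOA : rk {O, A} = 2) (hOA' : rk {O, A'} = 2) (hAA' : rk {A, A'} = 2)
    (hOBB' : rk {O, B, B'} = 2) (hOB : rk {O, B} = 2) (hOB' : rk {O, B'} = 2) (hBB' : rk {B, B'} = 2)
    (hOCC' : rk {O, C, C'} = 2) (hOC : rk {O, C} = 2) (hOC' : rk {O, C'} = 2) (hCC' : rk {C, C'} = 2)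
    (hODD' : rk {O, D, D'} = 2) (hOD : rk {O, D} = 2) (hOD' : rk {O, D'} = 2) (hDD' : rk {D, D'} = 2)
    -- O is independent of each tetrahedron
    (hO1 : rk {O, A, B, C} = 4) (hO2 : rk {O, A, B, D} = 4)
    (hO3 : rk {O, A, C, D} = 4) (hO4 : rk {O, B, C, D} = 4)
    (hO1' : rk {O, A', B', C'} = 4) (hO2' : rk {O, A', B', D'} = 4)
    (hO3' : rk {O, A', C', D'} = 4) (hO4' : rk {O, B', C', D'} = 4)
    -- intersection points of corresponding edges
    (hPAB : rk {A, B, P_AB} = 2) (hPAB' : rk {A', B', P_AB} = 2)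
    (hPAC : rk {A, C, P_AC} = 2) (hPAC' : rk {A', C', P_AC} = 2)
    (hPAD : rk {A, D, P_AD} = 2) (hPAD' : rk {A', D', P_AD} = 2)
    (hPBC : rk {B, C, P_BC} = 2) (hPBC' : rk {B', C', P_BC} = 2)
    (hPBD : rk {B, D, P_BD} = 2) (hPBD' : rk {B', D', P_BD} = 2)
    (hPCD : rk {C, D, P_CD} = 2) (hPCD' : rk {C', D', P_CD} = 2) :
    rk {P_AB, P_AC, P_AD, P_BC, P_BD, P_CD} = 3 ∧
    rk {P_AB, P_AC, P_BC} ≤ 2 ∧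
    rk {P_AB, P_AD, P_BD} ≤ 2 ∧
    rk {P_AC, P_AD, P_CD} ≤ 2 ∧
    rk {P_BC, P_BD, P_CD} ≤ 2 := by
  have f1 := d_face rk hA1 hA2 hA3 hA4 O A B C A' B' C' P_AB P_AC P_BC hOAA' hAA' hO1 hO1' hPAB hPAB' hPAC hPAC' hPBC hPBC'
  have f2 := d_face rk hA1 hA2 hA3 hA4 O A B D A' B' D' P_AB P_AD P_BD hOAA' hAA' hO2 hO2' hPAB hPAB' hPAD hPAD' hPBD hPBD'
  have f3 := d_face rk hA1 hA2 hA3 hA4 O A C D A' C' D' P_AC P_AD P_CD hOAA' hAA' hO3 hO3' hPAC hPAC' hPAD hPAD' hPCD hPCD'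
  have f4 := d_face rk hA1 hA2 hA3 hA4 O B C D B' C' D' P_BC P_BD P_CD hOBB' hBB' hO4 hO4' hPBC hPBC' hPBD hPBD' hPCD hPCD'
  have hp : rk {O, A', C', B'} = 4 := by
    rw [← hO1']; congr 1; clear * -; ext; simp only [Finset.mem_insert, Finset.mem_singleton]; tauto
  have hq : rk {O, A', D', B'} = 4 := by
    rw [← hO2']; congr 1; clear * -; ext; simp only [Finset.mem_insert, Finset.mem_singleton]; tauto
  have v1 := d_vert rk hA2 hA3 hA4 O A A' B' C' P_AB hOAA' hAA' hO1' hPAB'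
  have v2 := d_vert rk hA2 hA3 hA4 O A A' C' B' P_AC hOAA' hAA' hp hPAC'
  have v3 := d_vert rk hA2 hA3 hA4 O A A' D' B' P_AD hOAA' hAA' hq hPAD'
  have l1 := hA2 {A, P_AB, B} {A, B, P_AB} (by
    clear * -; intro x hx
    simp only [Finset.mem_insert, Finset.mem_singleton, Finset.mem_union, Finset.mem_inter] at hx ⊢
    tauto)
  have l2 := hA2 {A, P_AC, C} {A, C, P_AC} (by
    clear * -; intro x hx
    simp only [Finset.mem_insert, Finset.mem_singleton, Finset.mem_union, Finset.mem_inter] at hx ⊢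
    tauto)
  have l3 := hA2 {A, P_AD, D} {A, D, P_AD} (by
    clear * -; intro x hx
    simp only [Finset.mem_insert, Finset.mem_singleton, Finset.mem_union, Finset.mem_inter] at hx ⊢
    tauto)
  have s1 := d_step rk hA2 hA3 A P_AB B {A, P_AB, P_AC, P_AD} v1 (by omega) (by simp) (by simp)
  have s2 := d_step rk hA2 hA3 A P_AC C {B, A, P_AB, P_AC, P_AD} v2 (by omega) (by simp) (by simp)
  have s3 := d_step rk hA2 hA3 A P_AD D {C, B, A, P_AB, P_AC, P_AD} v3 (by omega)
    (by simp) (by simp)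
  have s4 := hA2 {A, B, C, D} {D, C, B, A, P_AB, P_AC, P_AD} (by
    clear * -; intro x hx
    simp only [Finset.mem_insert, Finset.mem_singleton, Finset.mem_union, Finset.mem_inter] at hx ⊢
    tauto)
  have s5 := hA9 {A, P_AB, P_AC, P_AD}
  have hI : rk {A, P_AB, P_AC, P_AD} = 4 := by omega
  have s6 := d_ins rk hA3 hA4 A {P_AB, P_AC, P_AD}
  have e1 := d_drop2 rk hA2 hA3 hA4 A P_AD {A, P_AB, P_AC, P_AD} {P_AB, P_AC} hI (by
    clear * -; intro x hx
    simp only [Finset.mem_insert, Finset.mem_singleton, Finset.mem_union, Finset.mem_inter] at hx ⊢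
    tauto)
  have e2 := d_drop2 rk hA2 hA3 hA4 A P_AC {A, P_AB, P_AC, P_AD} {P_AB, P_AD} hI (by
    clear * -; intro x hx
    simp only [Finset.mem_insert, Finset.mem_singleton, Finset.mem_union, Finset.mem_inter] at hx ⊢
    tauto)
  have e3 := d_drop2 rk hA2 hA3 hA4 A P_AB {A, P_AB, P_AC, P_AD} {P_AC, P_AD} hI (by
    clear * -; intro x hx
    simp only [Finset.mem_insert, Finset.mem_singleton, Finset.mem_union, Finset.mem_inter] at hx ⊢
    tauto)
  have t1 := d_step rk hA2 hA3 P_AB P_AC P_BC {P_AB, P_AC, P_AD} e1 f1 (by simp) (by simp)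
  have t2 := d_step rk hA2 hA3 P_AB P_AD P_BD {P_BC, P_AB, P_AC, P_AD} e2 f2 (by simp) (by simp)
  have t3 := d_step rk hA2 hA3 P_AC P_AD P_CD {P_BD, P_BC, P_AB, P_AC, P_AD} e3 f3
    (by simp) (by simp)
  have t4 := hA2 {P_AB, P_AC, P_AD, P_BC, P_BD, P_CD} {P_CD, P_BD, P_BC, P_AB, P_AC, P_AD}
    (by
    clear * -; intro x hx
    simp only [Finset.mem_insert, Finset.mem_singleton, Finset.mem_union, Finset.mem_inter] at hx ⊢
    tauto)
  have t5 := hA2 {P_AB, P_AC, P_AD} {P_AB, P_AC, P_AD, P_BC, P_BD, P_CD} (by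
    clear * -; intro x hx
    simp only [Finset.mem_insert, Finset.mem_singleton, Finset.mem_union, Finset.mem_inter] at hx ⊢
    tauto)
  have c := (hA1 {P_AB, P_AC, P_AD}).trans Finset.card_le_three
  exact ⟨by omega, f1, f2, f3, f4⟩
end

section
/- Desargues' theorem in dimension 4 for pentachora. Let rk be a rank function satisfying (A1)–(A4) and rk X ≤ 5 for every finite set X. Let O; A, B, C, D, E; A', B', C', D', E' be points with rk{A,B,C,D,E} = 5 and rk{A',B',C',D',E'} = 5 (two pentachora), in perspective from O: for each pair (X,X') among (A,A'), (B,B'), (C,C'), (D,D'), (E,E') one has rk{O,X,X'} = 2, rk{O,X} = 2, rk{O,X'} = 2, rk{X,X'} = 2; and O is independent of each pentachoron, i.e. rk{O,W,X,Y,Z} = 5 for every four distinct vertices W, X, Y, Z of {A,B,C,D,E} and of {A',B',C',D',E'}. Let P_XY, for each of the ten pairs {X,Y} of distinct vertices of {A,B,C,D,E}, be a point with rk{X,Y,P_XY} = 2 and rk{X',Y',P_XY} = 2. Then the set of the ten points P_XY has rank 4 (they span a 3-dimensional space) and for each of the ten triangular faces {X,Y,Z} of the pentachoron one has rk{P_XY,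 P_XZ, P_YZ} ≤ 2. -/
/-- The axioms of a rank function. -/
structure RkAx {Pt : Type*} [DecidableEq Pt] (rk : Finset Pt → ℕ) : Prop where
  card : ∀ X : Finset Pt, rk X ≤ X.card
  mono : ∀ X Y : Finset Pt, X ⊆ Y → rk X ≤ rk Y
  sub : ∀ X Y : Finset Pt, rk (X ∪ Y) + rk (X ∩ Y) ≤ rk X + rk Y
  one : ∀ p : Pt, rk {p} = 1

/-- `p` is in the closure of `X`. -/
def InCl {Pt : Type*} [DecidableEq Pt] (rk : Finset Pt → ℕ) (p : Pt) (X : Finset Pt) : Prop :=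
  rk (insert p X) ≤ rk X

namespace RkAx

variable {Pt : Type*} [DecidableEq Pt] {rk : Finset Pt → ℕ}

lemma cl_mono (h : RkAx rk) {p : Pt} {X Y : Finset Pt} (hp : InCl rk p X) (hXY : X ⊆ Y) :
    InCl rk p Y := by
  unfold InCl at *
  have h1 := h.sub (insert p X) Y
  have h2 := h.mono X (insert p X ∩ Y)
    (Finset.subset_inter (Finset.subset_insert _ _) hXY)
  have h3 := h.mono (insert p Y) (insert p X ∪ Y) (by
    intro x; simp only [Finset.mem_insert, Finset.mem_union]; tauto)
  omega

lemma cl_union (h : RkAx rk) (X Y : Finset Pt) (hY : ∀ y ∈ Y, InCl rk y X) :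
    rk (X ∪ Y) ≤ rk X := by
  induction Y using Finset.induction_on with
  | empty => simp
  | insert a s _ ih =>
    have h1 := ih (fun y hy => hY y (Finset.mem_insert_of_mem hy))
    have h2 : InCl rk a (X ∪ s) :=
      h.cl_mono (hY a (Finset.mem_insert_self _ _)) Finset.subset_union_left
    rw [Finset.union_insert]
    exact le_trans h2 h1

lemma cl_bound (h : RkAx rk) (X Y : Finset Pt) (hY : ∀ y ∈ Y, InCl rk y X) :
    rk Y ≤ rk X :=
  le_trans (h.mono _ _ Finset.subset_union_right) (h.cl_union X Y hY)

lemma cl_self (X : Finset Pt) {p : Pt} (hp : p ∈ X) : InCl rk p X := by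
  unfold InCl; rw [Finset.insert_eq_of_mem hp]

lemma cl_trans (h : RkAx rk) {a : Pt} {Y Z : Finset Pt} (ha : InCl rk a Y)
    (hY : ∀ y ∈ Y, InCl rk y Z) : InCl rk a Z := by
  have h1 := h.cl_union Z Y hY
  have h2 : InCl rk a (Z ∪ Y) := h.cl_mono ha Finset.subset_union_right
  have h3 := h.mono (insert a Z) (insert a (Z ∪ Y))
    (Finset.insert_subset_insert _ Finset.subset_union_left)
  unfold InCl at *
  omega

lemma drop (h : RkAx rk) {n : ℕ} (p : Pt) {S X : Finset Pt} (hS : n + 1 ≤ rk S)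
    (hX : S ⊆ insert p X) : n ≤ rk X := by
  have h1 := h.mono _ _ hX
  have h2 := h.sub {p} X
  rw [h.one, ← Finset.insert_eq] at h2
  omega

lemma cl_of (h : RkAx rk) {n : ℕ} (p : Pt) {S X : Finset Pt} (hS : rk S ≤ n)
    (hX : n ≤ rk X) (hs : insert p X ⊆ S) : InCl rk p X :=
  le_trans (h.mono _ _ hs) (le_trans hS hX)

lemma card_three (h : RkAx rk) (a b c : Pt) : rk {a, b, c} ≤ 3 :=
  le_trans (h.card _) Finset.card_le_three

/-- Desargues for two triangles in a common rank-4 space. -/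
lemma tri (h : RkAx rk) {O A B C A' B' C' P Q R : Pt}
    (hO : 4 ≤ rk {O, A, B, C}) (hO' : 4 ≤ rk {O, A', B', C'})
    (hOA : rk {O, A, A'} = 2) (hA : rk {A, A'} = 2)
    (hP : rk {A, B, P} = 2) (hP' : rk {A', B', P} = 2)
    (hQ : rk {A, C, Q} = 2) (hQ' : rk {A', C', Q} = 2)
    (hR : rk {B, C, R} = 2) (hR' : rk {B', C', R} = 2) : rk {P, Q, R} ≤ 2 := by
  have key : ∀ {A B C : Pt}, 4 ≤ rk {O, A, B, C} → rk {A, B, P} = 2 → rk {A, C, Q} = 2 →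
      rk {B, C, R} = 2 → rk ({A, B, C} ∪ {P, Q, R}) ≤ 3 := by
    intro A B C hO hP hQ hR
    have t : 3 ≤ rk {A, B, C} := h.drop O hO (by simp)
    have hAB : 2 ≤ rk {A, B} := h.drop C t (by simp [Finset.insert_subset_iff])
    have hAC : 2 ≤ rk {A, C} := h.drop B t (by simp [Finset.insert_subset_iff])
    have hBC : 2 ≤ rk {B, C} := h.drop A t (by intro x; simp)
    have p : InCl rk P {A, B} := h.cl_of P hP.le hAB (by simp [Finset.insert_subset_iff])
    have q : InCl rk Q {A, C} := h.cl_of Q hQ.le hAC (by simp [Finset.insert_subset_iff])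
    have r : InCl rk R {B, C} := h.cl_of R hR.le hBC (by simp [Finset.insert_subset_iff])
    refine le_trans (h.cl_union _ _ ?_) (h.card_three A B C)
    intro y hy
    simp only [Finset.mem_insert, Finset.mem_singleton] at hy
    rcases hy with rfl | rfl | rfl
    · exact h.cl_mono p (by simp [Finset.insert_subset_iff])
    · exact h.cl_mono q (by simp [Finset.insert_subset_iff])
    · exact h.cl_mono r (by simp [Finset.insert_subset_iff])
  have k1 := key hO hP hQ hR
  have k2 := key hO' hP' hQ' hR'
  have k3 := h.sub ({A, B, C} ∪ {P, Q, R}) ({A', B', C'} ∪ {P, Q, R})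
  have k4 : rk {P, Q, R} ≤ rk (({A, B, C} ∪ {P, Q, R}) ∩ ({A', B', C'} ∪ {P, Q, R})) :=
    h.mono _ _ (Finset.subset_inter Finset.subset_union_right Finset.subset_union_right)
  have o : InCl rk O {A, A'} := h.cl_of O hOA.le hA.ge (by intro x; simp)
  have k5 : rk {O, A, B, C} ≤ rk (({A, B, C} ∪ {P, Q, R}) ∪ ({A', B', C'} ∪ {P, Q, R})) := by
    apply h.cl_bound
    intro y hy
    simp only [Finset.mem_insert, Finset.mem_singleton] at hy
    rcases hy with rfl | rfl | rfl | rfl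
    · exact h.cl_mono o (by simp [Finset.insert_subset_iff])
    all_goals exact cl_self _ (by simp)
  omega

/-- The intersection point of two corresponding edges is not a vertex. -/
lemma ne_vertex (h : RkAx rk) {O A A' B' P : Pt} (hO' : 3 ≤ rk {O, A', B'})
    (hOA : rk {O, A, A'} = 2) (hA : rk {A, A'} = 2)
    (hP' : rk {A', B', P} = 2) : 2 ≤ rk {A, P} := by
  by_contra hc
  have hAB : 2 ≤ rk {A', B'} := h.drop O hO' (by simp)
  have p : InCl rk P {A', B'} := h.cl_of P hP'.le hAB (by simp [Finset.insert_subset_iff])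
  have a : InCl rk A {P} := h.cl_of A (n := 1) (S := {A, P}) (by omega) (h.one P).ge (by simp)
  have a' : InCl rk A {A', B'} := h.cl_trans a (by simpa using p)
  have o : InCl rk O {A, A'} := h.cl_of O hOA.le hA.ge (by intro x; simp)
  have o' : InCl rk O {A', B'} := h.cl_trans o (by
    intro y hy
    simp only [Finset.mem_insert, Finset.mem_singleton] at hy
    rcases hy with rfl | rfl
    · exact a'
    · exact cl_self _ (by simp))
  have : rk {O, A', B'} ≤ rk {A', B'} := o'
  have := h.card {A', B'}
  have := Finset.card_le_two (a := A') (b := B')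
  omega

/-- The third point of a triangle is spanned by the other two. -/
lemma third (h : RkAx rk) {A B C P Q R : Pt} (hABC : 3 ≤ rk {A, B, C})
    (hP : rk {A, B, P} = 2) (hQ : rk {A, C, Q} = 2) (hAQ : 2 ≤ rk {A, Q})
    (hPQR : rk {P, Q, R} ≤ 2) : InCl rk R {P, Q} := by
  refine h.cl_of R hPQR ?_ (by simp [Finset.insert_subset_iff])
  by_contra hc
  have hAB : 2 ≤ rk {A, B} := h.drop C hABC (by simp [Finset.insert_subset_iff])
  have p : InCl rk P {A, B} := h.cl_of P hP.le hAB (by simp [Finset.insert_subset_iff])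
  have q : InCl rk Q {P} := h.cl_of Q (n := 1) (S := {P, Q}) (by omega) (h.one P).ge
    (by simp [Finset.insert_subset_iff])
  have q' : InCl rk Q {A, B} := h.cl_trans q (by simpa using p)
  have c : InCl rk C {A, Q} := h.cl_of C hQ.le hAQ (by simp [Finset.insert_subset_iff])
  have c' : InCl rk C {A, B} := h.cl_trans c (by
    intro y hy
    simp only [Finset.mem_insert, Finset.mem_singleton] at hy
    rcases hy with rfl | rfl
    · exact cl_self _ (by simp)
    · exact q')
  have c1 : rk {C, A, B} ≤ rk {A, B} := c'
  have := h.card {A, B}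
  have := Finset.card_le_two (a := A) (b := B)
  have := h.mono {A, B, C} {C, A, B} (by simp [Finset.insert_subset_iff])
  omega

end RkAx

set_option maxHeartbeats 2000000 in

/-- Desargues' theorem in dimension 4 for pentachora: the ten
intersection points of corresponding edges of two pentachora in perspective
from a point span a 3-dimensional space, and the three points coming from
each triangular face are collinear. -/
theorem stmt_12 {Pt : Type*} [DecidableEq Pt] (rk : Finset Pt → ℕ)
    (hA1 : ∀ X : Finset Pt, rk X ≤ X.card)
    (hA2 : ∀ X Y : Finset Pt, X ⊆ Y → rk X ≤ rk Y)
    (hA3 : ∀ X Y : Finset Pt, rk (X ∪ Y) + rk (X ∩ Y) ≤ rk X + rk Y)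
    (hA4 : ∀ p : Pt, rk {p} = 1)
    (hdim : ∀ X : Finset Pt, rk X ≤ 5)
    (O A B C D E A' B' C' D' E' : Pt)
    (P_AB P_AC P_AD P_AE P_BC P_BD P_BE P_CD P_CE P_DE : Pt)
    -- the two pentachora
    (hT : rk {A, B, C, D, E} = 5)
    (hT' : rk {A', B', C', D', E'} = 5)
    -- perspective from O
    (hOAA' : rk {O, A, A'} = 2) (hOA : rk {O, A} = 2) (hOA' : rk {O, A'} = 2) (hAA' : rk {A, A'} = 2)
    (hOBB' : rk {O, B, B'} = 2) (hOB : rk {O, B} = 2) (hOB' : rk {O, B'} = 2) (hBB' : rk {B, B'} = 2)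
    (hOCC' : rk {O, C, C'} = 2) (hOC : rk {O, C} = 2) (hOC' : rk {O, C'} = 2) (hCC' : rk {C, C'} = 2)
    (hODD' : rk {O, D, D'} = 2) (hOD : rk {O, D} = 2) (hOD' : rk {O, D'} = 2) (hDD' : rk {D, D'} = 2)
    (hOEE' : rk {O, E, E'} = 2) (hOE : rk {O, E} = 2) (hOE' : rk {O, E'} = 2) (hEE' : rk {E, E'} = 2)
    -- O is independent of each pentachoron
    (hO1 : rk {O, A, B, C, D} = 5) (hO2 : rk {O, A, B, C, E} = 5)
    (hO3 : rk {O, A, B, D, E} = 5) (hO4 : rk {O, A, C, D, E} = 5)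
    (hO5 : rk {O, B, C, D, E} = 5)
    (hO1' : rk {O, A', B', C', D'} = 5) (hO2' : rk {O, A', B', C', E'} = 5)
    (hO3' : rk {O, A', B', D', E'} = 5) (hO4' : rk {O, A', C', D', E'} = 5)
    (hO5' : rk {O, B', C', D', E'} = 5)
    -- intersection points of corresponding edges
    (hPAB : rk {A, B, P_AB} = 2) (hPAB' : rk {A', B', P_AB} = 2)
    (hPAC : rk {A, C, P_AC} = 2) (hPAC' : rk {A', C', P_AC} = 2)
    (hPAD : rk {A, D, P_AD} = 2) (hPAD' : rk {A', D', P_AD} = 2)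
    (hPAE : rk {A, E, P_AE} = 2) (hPAE' : rk {A', E', P_AE} = 2)
    (hPBC : rk {B, C, P_BC} = 2) (hPBC' : rk {B', C', P_BC} = 2)
    (hPBD : rk {B, D, P_BD} = 2) (hPBD' : rk {B', D', P_BD} = 2)
    (hPBE : rk {B, E, P_BE} = 2) (hPBE' : rk {B', E', P_BE} = 2)
    (hPCD : rk {C, D, P_CD} = 2) (hPCD' : rk {C', D', P_CD} = 2)
    (hPCE : rk {C, E, P_CE} = 2) (hPCE' : rk {C', E', P_CE} = 2)
    (hPDE : rk {D, E, P_DE} = 2) (hPDE' : rk {D', E', P_DE} = 2) :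
    rk {P_AB, P_AC, P_AD, P_AE, P_BC, P_BD, P_BE, P_CD, P_CE, P_DE} = 4 ∧
    rk {P_AB, P_AC, P_BC} ≤ 2 ∧
    rk {P_AB, P_AD, P_BD} ≤ 2 ∧
    rk {P_AB, P_AE, P_BE} ≤ 2 ∧
    rk {P_AC, P_AD, P_CD} ≤ 2 ∧
    rk {P_AC, P_AE, P_CE} ≤ 2 ∧
    rk {P_AD, P_AE, P_DE} ≤ 2 ∧
    rk {P_BC, P_BD, P_CD} ≤ 2 ∧
    rk {P_BC, P_BE, P_CE} ≤ 2 ∧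
    rk {P_BD, P_BE, P_DE} ≤ 2 ∧
    rk {P_CD, P_CE, P_DE} ≤ 2 := by
  have h : RkAx rk := ⟨hA1, hA2, hA3, hA4⟩
  have o_ABC : 4 ≤ rk {O, A, B, C} := h.drop E hO2.ge (by simp [Finset.insert_subset_iff])
  have o_ABC' : 4 ≤ rk {O, A', B', C'} := h.drop E' hO2'.ge (by simp [Finset.insert_subset_iff])
  have t_ABC : rk {P_AB, P_AC, P_BC} ≤ 2 :=
    h.tri o_ABC o_ABC' hOAA' hAA' hPAB hPAB' hPAC hPAC' hPBC hPBC'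
  have o_ABD : 4 ≤ rk {O, A, B, D} := h.drop E hO3.ge (by simp [Finset.insert_subset_iff])
  have o_ABD' : 4 ≤ rk {O, A', B', D'} := h.drop E' hO3'.ge (by simp [Finset.insert_subset_iff])
  have t_ABD : rk {P_AB, P_AD, P_BD} ≤ 2 :=
    h.tri o_ABD o_ABD' hOAA' hAA' hPAB hPAB' hPAD hPAD' hPBD hPBD'
  have o_ABE : 4 ≤ rk {O, A, B, E} := h.drop D hO3.ge (by simp [Finset.insert_subset_iff])
  have o_ABE' : 4 ≤ rk {O, A', B', E'} := h.drop D' hO3'.ge (by simp [Finset.insert_subset_iff])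
  have t_ABE : rk {P_AB, P_AE, P_BE} ≤ 2 :=
    h.tri o_ABE o_ABE' hOAA' hAA' hPAB hPAB' hPAE hPAE' hPBE hPBE'
  have o_ACD : 4 ≤ rk {O, A, C, D} := h.drop E hO4.ge (by simp [Finset.insert_subset_iff])
  have o_ACD' : 4 ≤ rk {O, A', C', D'} := h.drop E' hO4'.ge (by simp [Finset.insert_subset_iff])
  have t_ACD : rk {P_AC, P_AD, P_CD} ≤ 2 :=
    h.tri o_ACD o_ACD' hOAA' hAA' hPAC hPAC' hPAD hPAD' hPCD hPCD'
  have o_ACE : 4 ≤ rk {O, A, C, E} := h.drop D hO4.ge (by simp [Finset.insert_subset_iff])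
  have o_ACE' : 4 ≤ rk {O, A', C', E'} := h.drop D' hO4'.ge (by simp [Finset.insert_subset_iff])
  have t_ACE : rk {P_AC, P_AE, P_CE} ≤ 2 :=
    h.tri o_ACE o_ACE' hOAA' hAA' hPAC hPAC' hPAE hPAE' hPCE hPCE'
  have o_ADE : 4 ≤ rk {O, A, D, E} := h.drop C hO4.ge (by simp [Finset.insert_subset_iff])
  have o_ADE' : 4 ≤ rk {O, A', D', E'} := h.drop C' hO4'.ge (by simp [Finset.insert_subset_iff])
  have t_ADE : rk {P_AD, P_AE, P_DE} ≤ 2 :=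
    h.tri o_ADE o_ADE' hOAA' hAA' hPAD hPAD' hPAE hPAE' hPDE hPDE'
  have o_BCD : 4 ≤ rk {O, B, C, D} := h.drop E hO5.ge (by simp [Finset.insert_subset_iff])
  have o_BCD' : 4 ≤ rk {O, B', C', D'} := h.drop E' hO5'.ge (by simp [Finset.insert_subset_iff])
  have t_BCD : rk {P_BC, P_BD, P_CD} ≤ 2 :=
    h.tri o_BCD o_BCD' hOBB' hBB' hPBC hPBC' hPBD hPBD' hPCD hPCD'
  have o_BCE : 4 ≤ rk {O, B, C, E} := h.drop D hO5.ge (by simp [Finset.insert_subset_iff])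
  have o_BCE' : 4 ≤ rk {O, B', C', E'} := h.drop D' hO5'.ge (by simp [Finset.insert_subset_iff])
  have t_BCE : rk {P_BC, P_BE, P_CE} ≤ 2 :=
    h.tri o_BCE o_BCE' hOBB' hBB' hPBC hPBC' hPBE hPBE' hPCE hPCE'
  have o_BDE : 4 ≤ rk {O, B, D, E} := h.drop C hO5.ge (by simp [Finset.insert_subset_iff])
  have o_BDE' : 4 ≤ rk {O, B', D', E'} := h.drop C' hO5'.ge (by simp [Finset.insert_subset_iff])
  have t_BDE : rk {P_BD, P_BE, P_DE} ≤ 2 :=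
    h.tri o_BDE o_BDE' hOBB' hBB' hPBD hPBD' hPBE hPBE' hPDE hPDE'
  have o_CDE : 4 ≤ rk {O, C, D, E} := h.drop B hO5.ge (by simp [Finset.insert_subset_iff])
  have o_CDE' : 4 ≤ rk {O, C', D', E'} := h.drop B' hO5'.ge (by simp [Finset.insert_subset_iff])
  have t_CDE : rk {P_CD, P_CE, P_DE} ≤ 2 :=
    h.tri o_CDE o_CDE' hOCC' hCC' hPCD hPCD' hPCE hPCE' hPDE hPDE'
  have v_AB : 2 ≤ rk {A, P_AB} :=
    h.ne_vertex (h.drop C' o_ABC' (by simp [Finset.insert_subset_iff])) hOAA' hAA' hPAB'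
  have v_AC : 2 ≤ rk {A, P_AC} :=
    h.ne_vertex (h.drop B' o_ABC' (by simp [Finset.insert_subset_iff])) hOAA' hAA' hPAC'
  have v_AD : 2 ≤ rk {A, P_AD} :=
    h.ne_vertex (h.drop B' o_ABD' (by simp [Finset.insert_subset_iff])) hOAA' hAA' hPAD'
  have v_AE : 2 ≤ rk {A, P_AE} :=
    h.ne_vertex (h.drop B' o_ABE' (by simp [Finset.insert_subset_iff])) hOAA' hAA' hPAE'
  have i_BC : InCl rk P_BC {P_AB, P_AC} :=
    h.third (h.drop O o_ABC (by simp)) hPAB hPAC v_AC t_ABC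
  have i_BD : InCl rk P_BD {P_AB, P_AD} :=
    h.third (h.drop O o_ABD (by simp)) hPAB hPAD v_AD t_ABD
  have i_BE : InCl rk P_BE {P_AB, P_AE} :=
    h.third (h.drop O o_ABE (by simp)) hPAB hPAE v_AE t_ABE
  have i_CD : InCl rk P_CD {P_AC, P_AD} :=
    h.third (h.drop O o_ACD (by simp)) hPAC hPAD v_AD t_ACD
  have i_CE : InCl rk P_CE {P_AC, P_AE} :=
    h.third (h.drop O o_ACE (by simp)) hPAC hPAE v_AE t_ACE
  have i_DE : InCl rk P_DE {P_AD, P_AE} :=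
    h.third (h.drop O o_ADE (by simp)) hPAD hPAE v_AE t_ADE
  have w_B : InCl rk B {A, P_AB} := h.cl_of B hPAB.le v_AB (by simp [Finset.insert_subset_iff])
  have w_C : InCl rk C {A, P_AC} := h.cl_of C hPAC.le v_AC (by simp [Finset.insert_subset_iff])
  have w_D : InCl rk D {A, P_AD} := h.cl_of D hPAD.le v_AD (by simp [Finset.insert_subset_iff])
  have w_E : InCl rk E {A, P_AE} := h.cl_of E hPAE.le v_AE (by simp [Finset.insert_subset_iff])
  have lo : 4 ≤ rk {P_AB, P_AC, P_AD, P_AE} := by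
    have h1 : rk {A, B, C, D, E} ≤ rk {A, P_AB, P_AC, P_AD, P_AE} := by
      apply h.cl_bound
      intro y hy
      simp only [Finset.mem_insert, Finset.mem_singleton] at hy
      rcases hy with rfl | rfl | rfl | rfl | rfl
      · exact RkAx.cl_self _ (by simp)
      · exact h.cl_mono w_B (by simp [Finset.insert_subset_iff])
      · exact h.cl_mono w_C (by simp [Finset.insert_subset_iff])
      · exact h.cl_mono w_D (by simp [Finset.insert_subset_iff])
      · exact h.cl_mono w_E (by simp [Finset.insert_subset_iff])
    exact h.drop A (hT.ge.trans h1) (by simp)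
  have lo' := h.mono {P_AB, P_AC, P_AD, P_AE}
    {P_AB, P_AC, P_AD, P_AE, P_BC, P_BD, P_BE, P_CD, P_CE, P_DE} (by simp [Finset.insert_subset_iff])
  have hi : rk {P_AB, P_AC, P_AD, P_AE, P_BC, P_BD, P_BE, P_CD, P_CE, P_DE} ≤
      rk {P_AB, P_AC, P_AD, P_AE} := by
    apply h.cl_bound
    intro y hy
    simp only [Finset.mem_insert, Finset.mem_singleton] at hy
    rcases hy with e | e | e | e | e | e | e | e | e | e <;> rw [e]
    iterate 4 exact RkAx.cl_self _ (by simp)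
    · exact h.cl_mono i_BC (by simp [Finset.insert_subset_iff])
    · exact h.cl_mono i_BD (by simp [Finset.insert_subset_iff])
    · exact h.cl_mono i_BE (by simp [Finset.insert_subset_iff])
    · exact h.cl_mono i_CD (by simp [Finset.insert_subset_iff])
    · exact h.cl_mono i_CE (by simp [Finset.insert_subset_iff])
    · exact h.cl_mono i_DE (by simp [Finset.insert_subset_iff])
  have hi' : rk {P_AB, P_AC, P_AD, P_AE} ≤ 4 := le_trans (h.card _) Finset.card_le_four
  exact ⟨by omega, t_ABC, t_ABD, t_ABE, t_ACD, t_ACE, t_ADE, t_BCD, t_BCE, t_BDE, t_CDE⟩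
end

section
/- In a 5-dimensional projective incidence space, the intersection of two distinct hyperplanes is contained in a 3-dimensional space. Let rk be a rank function satisfying (A1)–(A3). Let A, B, C, D, E, A', B', C', D', E', I, J, K, L, M be points with rk{A,B,C,D,E} = 5, rk{A',B',C',D',E'} = 5, rk{A,B,C,D,E,A',B',C',D',E'} = 6; suppose each of I, J, K, L, M lies in both hyperplanes, i.e. rk({X} ∪ {A,B,C,D,E}) = 5 and rk({X} ∪ {A',B',C',D',E'}) = 5 for X ∈ {I,J,K,L,M}; and suppose every 4-element subset of {I,J,K,L,M} has rank 4 (i.e. rk{I,J,K,L} = rk{I,J,K,M} = rk{I,J,L,M} = rk{I,K,L,M} = rk{J,K,L,M} = 4). Then rk{I,J,K,L,M} = 4. -/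
/-- In a 5D projective incidence space, the intersection of two
distinct hyperplanes is contained in a 3-dimensional space. -/
theorem stmt_14 {Pt : Type*} [DecidableEq Pt] (rk : Finset Pt → ℕ)
    (hA1 : ∀ X : Finset Pt, rk X ≤ X.card)
    (hA2 : ∀ X Y : Finset Pt, X ⊆ Y → rk X ≤ rk Y)
    (hA3 : ∀ X Y : Finset Pt, rk (X ∪ Y) + rk (X ∩ Y) ≤ rk X + rk Y)
    (A B C D E A' B' C' D' E' I J K L M : Pt)
    (hH : rk {A, B, C, D, E} = 5)
    (hH' : rk {A', B', C', D', E'} = 5)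
    (hdistinct : rk {A, B, C, D, E, A', B', C', D', E'} = 6)
    (hI1 : rk {I, A, B, C, D, E} = 5) (hI2 : rk {I, A', B', C', D', E'} = 5)
    (hJ1 : rk {J, A, B, C, D, E} = 5) (hJ2 : rk {J, A', B', C', D', E'} = 5)
    (hK1 : rk {K, A, B, C, D, E} = 5) (hK2 : rk {K, A', B', C', D', E'} = 5)
    (hL1 : rk {L, A, B, C, D, E} = 5) (hL2 : rk {L, A', B', C', D', E'} = 5)
    (hM1 : rk {M, A, B, C, D, E} = 5) (hM2 : rk {M, A', B', C', D', E'} = 5)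
    (hIJKL : rk {I, J, K, L} = 4)
    (hIJKM : rk {I, J, K, M} = 4)
    (hIJLM : rk {I, J, L, M} = 4)
    (hIKLM : rk {I, K, L, M} = 4)
    (hJKLM : rk {J, K, L, M} = 4) :
    rk {I, J, K, L, M} = 4 := by
  have step : ∀ (x : Pt) (H T : Finset Pt), H ⊆ T → rk H = 5 → rk (insert x H) = 5 →
      rk T ≤ 5 → rk (insert x T) ≤ 5 := by
    intro x H T hHT h1 h2 h3
    have h4 := hA3 (insert x H) T
    have h5 := hA2 H (insert x H ∩ T)
      (Finset.subset_inter (Finset.subset_insert x H) hHT)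
    have h6 := hA2 (insert x T) (insert x H ∪ T) (by
      clear * -
      intro y hy
      grind)
    omega
  have big : ∀ H : Finset Pt, rk H = 5 → rk (insert I H) = 5 → rk (insert J H) = 5 →
      rk (insert K H) = 5 → rk (insert L H) = 5 → rk (insert M H) = 5 →
      rk (insert I (insert J (insert K (insert L (insert M H))))) ≤ 5 := by
    intro H h hI hJ hK hL hM
    refine step I H _ ?_ h hI (step J H _ ?_ h hJ (step K H _ ?_ h hK
      (step L H _ ?_ h hL hM.le)))
    all_goals
      clear * -
      intro y hy
      simp [hy]
  have b1 := big _ hH hI1 hJ1 hK1 hL1 hM1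
  have b2 := big _ hH' hI2 hJ2 hK2 hL2 hM2
  have h3 := hA3 (insert I (insert J (insert K (insert L (insert M {A, B, C, D, E})))))
    (insert I (insert J (insert K (insert L (insert M {A', B', C', D', E'})))))
  have h4 := hA2 {I, J, K, L, M}
    ((insert I (insert J (insert K (insert L (insert M {A, B, C, D, E}))))) ∩
    (insert I (insert J (insert K (insert L (insert M {A', B', C', D', E'})))))) (by
      clear * -
      intro y hy
      grind)
  have h5 := hA2 {A, B, C, D, E, A', B', C', D', E'}
    ((insert I (insert J (insert K (insert L (insert M {A, B, C, D, E}))))) ∪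
    (insert I (insert J (insert K (insert L (insert M {A', B', C', D', E'})))))) (by
      clear * -
      intro y hy
      simp only [Finset.mem_insert, Finset.mem_singleton] at hy
      rcases hy with h | h | h | h | h | h | h | h | h | h <;> simp [h])
  have h6 := hA2 {I, J, K, L} {I, J, K, L, M} (by
      clear * -
      intro y hy
      grind)
  omega
end

section
/- Dandelin–Gallucci implies Pappus. Let rk be a rank function satisfying the full 3D projective rank axiom system: (A1)–(A4); (A5) rk{P,Q} = 2 whenever P ≠ Q; (A6) for all points A, B, C, D with rk{A,B,C,D} ≤ 3 there exists J with rk{A,B,J} = 2 and rk{C,D,J} = 2; (A7) for all points A, B there exists C with rk{A,B,C} = rk{B,C} = rk{A,C} = 2; (A8) there exist points P₁, P₂, P₃, P₄ with rk{P₁,P₂,P₃,P₄} = 4; (A9) rk X ≤ 4 for every finite set X; (A10) for all A, B, C, A', B' with rk{A,B,C} = 3 and rk{A',B'} = 2 there exists M with rk{A,B,C,M} = 3 and rk{A',B',M} = 2. If rk satisfies the Dandelin–Gallucci rank property, then rk satisfies the Pappus rank property. -/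
/-- Pappus rank property: for two triples of collinear, pairwise distinct
points on two distinct lines, the three intersection points of the cross
lines are collinear. -/
def PappusRank {Pt : Type*} [DecidableEq Pt] (rk : Finset Pt → ℕ) : Prop :=
  ∀ A B C A' B' C' X Y Z : Pt,
    rk {A, B, C} ≤ 2 → rk {A', B', C'} ≤ 2 →
    rk {A, B} = 2 → rk {A, C} = 2 → rk {B, C} = 2 →
    rk {A', B'} = 2 → rk {A', C'} = 2 → rk {B', C'} = 2 →
    rk {A, A'} = 2 → rk {A, B'} = 2 → rk {A, C'} = 2 →
    rk {B, A'} = 2 → rk {B, B'} = 2 → rk {B, C'} = 2 →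
    rk {C, A'} = 2 → rk {C, B'} = 2 → rk {C, C'} = 2 →
    3 ≤ rk {A, B, C, A', B', C'} →
    rk {A, B', X} ≤ 2 → rk {A', B, X} ≤ 2 →
    rk {A, C', Y} ≤ 2 → rk {A', C, Y} ≤ 2 →
    rk {B, C', Z} ≤ 2 → rk {B', C, Z} ≤ 2 →
    rk {X, Y, Z} ≤ 2

/-- A line is represented by an ordered pair of distinct points. -/
def IsLineRk {Pt : Type*} [DecidableEq Pt] (rk : Finset Pt → ℕ) (l : Pt × Pt) : Prop :=
  rk {l.1, l.2} = 2

/-- Two lines meet (are coplanar). -/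
def MeetRk {Pt : Type*} [DecidableEq Pt] (rk : Finset Pt → ℕ) (l m : Pt × Pt) : Prop :=
  rk {l.1, l.2, m.1, m.2} ≤ 3

/-- Two lines are skew. -/
def SkewRk {Pt : Type*} [DecidableEq Pt] (rk : Finset Pt → ℕ) (l m : Pt × Pt) : Prop :=
  rk {l.1, l.2, m.1, m.2} = 4

/-- Dandelin–Gallucci rank property: given lines a, b, c pairwise skew and
e, f, g pairwise skew such that every line among a, b, c meets every line
among e, f, g, any line d meeting e, f, g meets any line h meeting a, b, c. -/
def DGRank {Pt : Type*} [DecidableEq Pt] (rk : Finset Pt → ℕ) : Prop :=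
  ∀ a b c e f g d h : Pt × Pt,
    IsLineRk rk a → IsLineRk rk b → IsLineRk rk c →
    IsLineRk rk e → IsLineRk rk f → IsLineRk rk g →
    IsLineRk rk d → IsLineRk rk h →
    SkewRk rk a b → SkewRk rk a c → SkewRk rk b c →
    SkewRk rk e f → SkewRk rk e g → SkewRk rk f g →
    MeetRk rk a e → MeetRk rk a f → MeetRk rk a g →
    MeetRk rk b e → MeetRk rk b f → MeetRk rk b g →
    MeetRk rk c e → MeetRk rk c f → MeetRk rk c g →
    MeetRk rk d e → MeetRk rk d f → MeetRk rk d g →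
    MeetRk rk h a → MeetRk rk h b → MeetRk rk h c →
    MeetRk rk d h

/-- Monotonicity and submodularity packaged together. -/
def RkMS {Pt : Type*} [DecidableEq Pt] (rk : Finset Pt → ℕ) : Prop :=
  (∀ X Y : Finset Pt, X ⊆ Y → rk X ≤ rk Y) ∧
  (∀ X Y : Finset Pt, rk (X ∪ Y) + rk (X ∩ Y) ≤ rk X + rk Y)

/-- Working form of submodularity. -/
theorem rk_sm {Pt : Type*} [DecidableEq Pt] {rk : Finset Pt → ℕ} (h : RkMS rk)
    (X Y I U : Finset Pt)
    (hU : U ⊆ X ∪ Y := by simp [Finset.insert_subset_iff])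
    (hX : I ⊆ X := by simp [Finset.insert_subset_iff])
    (hY : I ⊆ Y := by simp [Finset.insert_subset_iff]) :
    rk U + rk I ≤ rk X + rk Y := by
  have h1 := h.1 _ _ hU
  have h2 := h.1 _ _ (Finset.subset_inter hX hY)
  have h3 := h.2 X Y
  omega

/-- Working form of monotonicity. -/
theorem rk_mono {Pt : Type*} [DecidableEq Pt] {rk : Finset Pt → ℕ} (h : RkMS rk)
    (U V : Finset Pt)
    (hU : U ⊆ V := by simp [Finset.insert_subset_iff]) : rk U ≤ rk V := h.1 _ _ hU

/-- Degenerate Pappus: `A` lies on the second line. -/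
theorem pappus_deg {Pt : Type*} [DecidableEq Pt] {rk : Finset Pt → ℕ} (h : RkMS rk)
    (hA5 : ∀ p q : Pt, p ≠ q → rk {p, q} = 2)
    (A B C A' B' C' X Y : Pt) (h0 : rk {A, A', B', C'} ≤ 2)
    (hl : rk {A, B, C} ≤ 2) (hAB : rk {A, B} = 2) (hAC : rk {A, C} = 2)
    (_hAA : rk {A, A'} = 2) (hAB' : rk {A, B'} = 2) (hAC' : rk {A, C'} = 2)
    (h6 : 3 ≤ rk {A, B, C, A', B', C'})
    (hX1 : rk {A, B', X} ≤ 2) (hX2 : rk {A', B, X} ≤ 2)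
    (hY1 : rk {A, C', Y} ≤ 2) (hY2 : rk {A', C, Y} ≤ 2) : X = Y := by
  have pX : rk {A, A', B', C', X} ≤ 2 := by
    have t0 := rk_sm h {A, A', B', C'} {A, B', X} {A, B'} {A, A', B', C', X}
    omega
  have eX : A' = X := by
    by_contra hne
    have t := hA5 _ _ hne
    have t0 := rk_sm h {A, A', B', C', X} {A', B, X} {A', X} {A, A', B', C', B}
    have t1 := rk_sm h {A, A', B', C', B} {A, B, C} {A, B} {A, B, C, A', B', C'}
    omega
  have pY : rk {A, A', B', C', Y} ≤ 2 := by
    have t0 := rk_sm h {A, A', B', C'} {A, C', Y} {A, C'} {A, A', B', C', Y}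
    omega
  have eY : A' = Y := by
    by_contra hne
    have t := hA5 _ _ hne
    have t0 := rk_sm h {A, A', B', C', Y} {A', C, Y} {A', Y} {A, A', B', C', C}
    have t1 := rk_sm h {A, A', B', C', C} {A, B, C} {A, C} {A, B, C, A', B', C'}
    omega
  rw [← eX, ← eY]

set_option maxHeartbeats 8000000 in
/-- In a 3D projective incidence space (given by the full rank
axiom system (A1)–(A10)), Dandelin–Gallucci's property implies Pappus's
property. -/
theorem stmt_17 {Pt : Type*} [DecidableEq Pt] (rk : Finset Pt → ℕ)
    (hA1 : ∀ X : Finset Pt, rk X ≤ X.card)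
    (hA2 : ∀ X Y : Finset Pt, X ⊆ Y → rk X ≤ rk Y)
    (hA3 : ∀ X Y : Finset Pt, rk (X ∪ Y) + rk (X ∩ Y) ≤ rk X + rk Y)
    (hA4 : ∀ p : Pt, rk {p} = 1)
    (hA5 : ∀ p q : Pt, p ≠ q → rk {p, q} = 2)
    (hA6 : ∀ A B C D : Pt, rk {A, B, C, D} ≤ 3 →
      ∃ J : Pt, rk {A, B, J} = 2 ∧ rk {C, D, J} = 2)
    (hA7 : ∀ A B : Pt, ∃ C : Pt,
      rk {A, B, C} = 2 ∧ rk {B, C} = 2 ∧ rk {A, C} = 2)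
    (hA8 : ∃ P₁ P₂ P₃ P₄ : Pt, rk {P₁, P₂, P₃, P₄} = 4)
    (hA9 : ∀ X : Finset Pt, rk X ≤ 4)
    (hA10 : ∀ A B C A' B' : Pt, rk {A, B, C} = 3 → rk {A', B'} = 2 →
      ∃ M : Pt, rk {A, B, C, M} = 3 ∧ rk {A', B', M} = 2)
    (hDG : DGRank rk) :
    PappusRank rk := by
  have h : RkMS rk := ⟨hA2, hA3⟩
  have card2 : ∀ p q : Pt, rk {p, q} ≤ 2 := fun p q => (hA1 _).trans Finset.card_le_two
  have card3 : ∀ p q r : Pt, rk {p, q, r} ≤ 3 := fun p q r => (hA1 _).trans Finset.card_le_three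
  intro A B C A' B' C' X Y Z hl hl' hAB hAC hBC hAB2 hAC2 hBC2 hAA' hAB' hAC' hBA' hBB' hBC' hCA' hCB' hCC' h6
    hX1 hX2 hY1 hY2 hZ1 hZ2
  by_contra hgoal
  have q1 : rk {A, B, A', B', X} ≤ 3 := by
    have t0 := rk_sm h {A, B', X} {A', B, X} {X} {A, B, A', B', X}
    have u := hA4 X
    omega
  have q2 : rk {A, B, C, A', B', X} ≤ 3 := by
    have t0 := rk_sm h {A, B, A', B', X} {A, B, C} {A, B} {A, B, C, A', B', X}
    omega
  have q3 : rk {A, B, C, A', B', C', X} ≤ 3 := by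
    have t0 := rk_sm h {A, B, C, A', B', X} {A', B', C'} {A', B'} {A, B, C, A', B', C', X}
    omega
  have q4 : rk {A, B, C, A', B', C', X, Y} ≤ 3 := by
    have t0 := rk_sm h {A, B, C, A', B', C', X} {A, C', Y} {A, C'} {A, B, C, A', B', C', X, Y}
    omega
  have q5 : rk {A, B, C, A', B', C', X, Y, Z} ≤ 3 := by
    have t0 := rk_sm h {A, B, C, A', B', C', X, Y} {B, C', Z} {B, C'} {A, B, C, A', B', C', X, Y, Z}
    omega
  have dA : 3 ≤ rk {A, A', B', C'} := by
    by_contra hc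
    have e := pappus_deg h hA5 A B C A' B' C' X Y (by omega)
      (by have t := rk_mono h {A, B, C} {A, B, C}; omega)
      (by have t := rk_mono h {B, A} {A, B}; have t' := card2 A B; omega)
      (by have t := rk_mono h {C, A} {A, C}; have t' := card2 A C; omega)
      (by have t := rk_mono h {A', A} {A, A'}; have t' := card2 A A'; omega)
      (by have t := rk_mono h {B', A} {A, B'}; have t' := card2 A B'; omega)
      (by have t := rk_mono h {C', A} {A, C'}; have t' := card2 A C'; omega)
      (by have t := rk_mono h {A, B, C, A', B', C'} {A, B, C, A', B', C'}; omega)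
      (by have t := rk_mono h {A, B', X} {A, B', X}; omega)
      (by have t := rk_mono h {A', B, X} {A', B, X}; omega)
      (by have t := rk_mono h {A, C', Y} {A, C', Y}; omega)
      (by have t := rk_mono h {A', C, Y} {A', C, Y}; omega)
    subst e
    exact hgoal (by simp [card2])
  have nAAB0 : rk {A, A', B'} ≥ 3 := by
    have t0 := rk_sm h {A, A', B'} {A', B', C'} {A', B'} {A, A', B', C'}
    omega
  have nAAC1 : rk {A, A', C'} ≥ 3 := by
    have t0 := rk_sm h {A, A', C'} {A', B', C'} {A', C'} {A, A', B', C'}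
    omega
  have nABC2 : rk {A, B', C'} ≥ 3 := by
    have t0 := rk_sm h {A, B', C'} {A', B', C'} {B', C'} {A, A', B', C'}
    omega
  have dA2 : 3 ≤ rk {A', A, B, C} := by
    by_contra hc
    have e := pappus_deg h hA5 A' B' C' A B C X Y (by omega)
      (by have t := rk_mono h {A', B', C'} {A', B', C'}; omega)
      (by have t := rk_mono h {B', A'} {A', B'}; have t' := card2 A' B'; omega)
      (by have t := rk_mono h {C', A'} {A', C'}; have t' := card2 A' C'; omega)
      (by have t := rk_mono h {A, A'} {A', A}; have t' := card2 A' A; omega)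
      (by have t := rk_mono h {B, A'} {A', B}; have t' := card2 A' B; omega)
      (by have t := rk_mono h {C, A'} {A', C}; have t' := card2 A' C; omega)
      (by have t := rk_mono h {A, B, C, A', B', C'} {A', B', C', A, B, C}; omega)
      (by have t := rk_mono h {A', B, X} {A', B, X}; omega)
      (by have t := rk_mono h {A, B', X} {A, B', X}; omega)
      (by have t := rk_mono h {A', C, Y} {A', C, Y}; omega)
      (by have t := rk_mono h {A, C', Y} {A, C', Y}; omega)
    subst e
    exact hgoal (by simp [card2])
  have nAAB3 : rk {A', A, B} ≥ 3 := by
    have t0 := rk_sm h {A', A, B} {A, B, C} {A, B} {A', A, B, C}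
    omega
  have nAAC4 : rk {A', A, C} ≥ 3 := by
    have t0 := rk_sm h {A', A, C} {A, B, C} {A, C} {A', A, B, C}
    omega
  have nABC5 : rk {A', B, C} ≥ 3 := by
    have t0 := rk_sm h {A', B, C} {A, B, C} {B, C} {A', A, B, C}
    omega
  have dB : 3 ≤ rk {B, B', A', C'} := by
    by_contra hc
    have e := pappus_deg h hA5 B A C B' A' C' X Z (by omega)
      (by have t := rk_mono h {B, A, C} {A, B, C}; omega)
      (by have t := rk_mono h {A, B} {B, A}; have t' := card2 B A; omega)
      (by have t := rk_mono h {C, B} {B, C}; have t' := card2 B C; omega)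
      (by have t := rk_mono h {B', B} {B, B'}; have t' := card2 B B'; omega)
      (by have t := rk_mono h {A', B} {B, A'}; have t' := card2 B A'; omega)
      (by have t := rk_mono h {C', B} {B, C'}; have t' := card2 B C'; omega)
      (by have t := rk_mono h {A, B, C, A', B', C'} {B, A, C, B', A', C'}; omega)
      (by have t := rk_mono h {B, A', X} {A', B, X}; omega)
      (by have t := rk_mono h {B', A, X} {A, B', X}; omega)
      (by have t := rk_mono h {B, C', Z} {B, C', Z}; omega)
      (by have t := rk_mono h {B', C, Z} {B', C, Z}; omega)
    subst e
    exact hgoal (by simp [card2])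
  have nABB6 : rk {B, A', B'} ≥ 3 := by
    have t0 := rk_sm h {B, A', B'} {A', B', C'} {A', B'} {B, B', A', C'}
    omega
  have nABC7 : rk {B, A', C'} ≥ 3 := by
    have t0 := rk_sm h {B, A', C'} {A', B', C'} {A', C'} {B, B', A', C'}
    omega
  have nBBC8 : rk {B, B', C'} ≥ 3 := by
    have t0 := rk_sm h {B, B', C'} {A', B', C'} {B', C'} {B, B', A', C'}
    omega
  have dB2 : 3 ≤ rk {B', B, A, C} := by
    by_contra hc
    have e := pappus_deg h hA5 B' A' C' B A C X Z (by omega)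
      (by have t := rk_mono h {B', A', C'} {A', B', C'}; omega)
      (by have t := rk_mono h {A', B'} {B', A'}; have t' := card2 B' A'; omega)
      (by have t := rk_mono h {C', B'} {B', C'}; have t' := card2 B' C'; omega)
      (by have t := rk_mono h {B, B'} {B', B}; have t' := card2 B' B; omega)
      (by have t := rk_mono h {A, B'} {B', A}; have t' := card2 B' A; omega)
      (by have t := rk_mono h {C, B'} {B', C}; have t' := card2 B' C; omega)
      (by have t := rk_mono h {A, B, C, A', B', C'} {B', A', C', B, A, C}; omega)
      (by have t := rk_mono h {B', A, X} {A, B', X}; omega)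
      (by have t := rk_mono h {B, A', X} {A', B, X}; omega)
      (by have t := rk_mono h {B', C, Z} {B', C, Z}; omega)
      (by have t := rk_mono h {B, C', Z} {B, C', Z}; omega)
    subst e
    exact hgoal (by simp [card2])
  have nABB9 : rk {B', A, B} ≥ 3 := by
    have t0 := rk_sm h {B', A, B} {A, B, C} {A, B} {B', B, A, C}
    omega
  have nABC10 : rk {B', A, C} ≥ 3 := by
    have t0 := rk_sm h {B', A, C} {A, B, C} {A, C} {B', B, A, C}
    omega
  have nBBC11 : rk {B', B, C} ≥ 3 := by
    have t0 := rk_sm h {B', B, C} {A, B, C} {B, C} {B', B, A, C}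
    omega
  have dC : 3 ≤ rk {C, C', A', B'} := by
    by_contra hc
    have e := pappus_deg h hA5 C A B C' A' B' Y Z (by omega)
      (by have t := rk_mono h {C, A, B} {A, B, C}; omega)
      (by have t := rk_mono h {A, C} {C, A}; have t' := card2 C A; omega)
      (by have t := rk_mono h {B, C} {C, B}; have t' := card2 C B; omega)
      (by have t := rk_mono h {C', C} {C, C'}; have t' := card2 C C'; omega)
      (by have t := rk_mono h {A', C} {C, A'}; have t' := card2 C A'; omega)
      (by have t := rk_mono h {B', C} {C, B'}; have t' := card2 C B'; omega)
      (by have t := rk_mono h {A, B, C, A', B', C'} {C, A, B, C', A', B'}; omega)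
      (by have t := rk_mono h {C, A', Y} {A', C, Y}; omega)
      (by have t := rk_mono h {C', A, Y} {A, C', Y}; omega)
      (by have t := rk_mono h {C, B', Z} {B', C, Z}; omega)
      (by have t := rk_mono h {C', B, Z} {B, C', Z}; omega)
    subst e
    exact hgoal (by simp [card2])
  have nABC12 : rk {C, A', B'} ≥ 3 := by
    have t0 := rk_sm h {C, A', B'} {A', B', C'} {A', B'} {C, C', A', B'}
    omega
  have nACC13 : rk {C, A', C'} ≥ 3 := by
    have t0 := rk_sm h {C, A', C'} {A', B', C'} {A', C'} {C, C', A', B'}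
    omega
  have nBCC14 : rk {C, B', C'} ≥ 3 := by
    have t0 := rk_sm h {C, B', C'} {A', B', C'} {B', C'} {C, C', A', B'}
    omega
  have dC2 : 3 ≤ rk {C', C, A, B} := by
    by_contra hc
    have e := pappus_deg h hA5 C' A' B' C A B Y Z (by omega)
      (by have t := rk_mono h {C', A', B'} {A', B', C'}; omega)
      (by have t := rk_mono h {A', C'} {C', A'}; have t' := card2 C' A'; omega)
      (by have t := rk_mono h {B', C'} {C', B'}; have t' := card2 C' B'; omega)
      (by have t := rk_mono h {C, C'} {C', C}; have t' := card2 C' C; omega)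
      (by have t := rk_mono h {A, C'} {C', A}; have t' := card2 C' A; omega)
      (by have t := rk_mono h {B, C'} {C', B}; have t' := card2 C' B; omega)
      (by have t := rk_mono h {A, B, C, A', B', C'} {C', A', B', C, A, B}; omega)
      (by have t := rk_mono h {C', A, Y} {A, C', Y}; omega)
      (by have t := rk_mono h {C, A', Y} {A', C, Y}; omega)
      (by have t := rk_mono h {C', B, Z} {B, C', Z}; omega)
      (by have t := rk_mono h {C, B', Z} {B', C, Z}; omega)
    subst e
    exact hgoal (by simp [card2])
  have nABC15 : rk {C', A, B} ≥ 3 := by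
    have t0 := rk_sm h {C', A, B} {A, B, C} {A, B} {C', C, A, B}
    omega
  have nACC16 : rk {C', A, C} ≥ 3 := by
    have t0 := rk_sm h {C', A, C} {A, B, C} {A, C} {C', C, A, B}
    omega
  have nBCC17 : rk {C', B, C} ≥ 3 := by
    have t0 := rk_sm h {C', B, C} {A, B, C} {B, C} {C', C, A, B}
    omega
  obtain ⟨S, hS⟩ : ∃ S, 4 ≤ rk {A, B, C, A', B', C', X, Y, Z, S} := by
    obtain ⟨P₁, P₂, P₃, P₄, hP⟩ := hA8
    by_contra hc
    push Not at hc
    have c₁ := hc P₁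
    have c₂ := hc P₂
    have c₃ := hc P₃
    have c₄ := hc P₄
    have t0 := rk_sm h {A, B, C, A', B', C', X, Y, Z, P₁} {A, B, C, A', B', C', X, Y, Z, P₂} {A, B, C, A', B', C', X, Y, Z} {A, B, C, A', B', C', X, Y, Z, P₁, P₂}
    have t1 := rk_sm h {A, B, C, A', B', C', X, Y, Z, P₁, P₂} {A, B, C, A', B', C', X, Y, Z, P₃} {A, B, C, A', B', C', X, Y, Z} {A, B, C, A', B', C', X, Y, Z, P₁, P₂, P₃}
    have t2 := rk_sm h {A, B, C, A', B', C', X, Y, Z, P₁, P₂, P₃} {A, B, C, A', B', C', X, Y, Z, P₄} {A, B, C, A', B', C', X, Y, Z} {P₁, P₂, P₃, P₄}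
    have t3 := rk_mono h {A, B, C, A', B', C'} {A, B, C, A', B', C', X, Y, Z}
    omega
  have h6P := rk_mono h {A, B, C, A', B', C'} {A, B, C, A', B', C', X, Y, Z}
  have gSAAB3 : rk {A, B, A', S} ≥ 4 := by
    have t0 := rk_sm h {A, B, A', S} {A, B, C, A', B', C', X, Y, Z} {A, B, A'} {A, B, C, A', B', C', X, Y, Z, S}
    have t1 := rk_mono h {A', A, B} {A, B, A'}
    omega
  have gSABB9 : rk {A, B, B', S} ≥ 4 := by
    have t0 := rk_sm h {A, B, B', S} {A, B, C, A', B', C', X, Y, Z} {A, B, B'} {A, B, C, A', B', C', X, Y, Z, S}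
    have t1 := rk_mono h {B', A, B} {A, B, B'}
    omega
  have gSAAB0 : rk {A, A', B', S} ≥ 4 := by
    have t0 := rk_sm h {A, A', B', S} {A, B, C, A', B', C', X, Y, Z} {A, A', B'} {A, B, C, A', B', C', X, Y, Z, S}
    have t1 := rk_mono h {A, A', B'} {A, A', B'}
    omega
  have gSABC2 : rk {A, B', C', S} ≥ 4 := by
    have t0 := rk_sm h {A, B', C', S} {A, B, C, A', B', C', X, Y, Z} {A, B', C'} {A, B, C, A', B', C', X, Y, Z, S}
    have t1 := rk_mono h {A, B', C'} {A, B', C'}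
    omega
  have gSAAC4 : rk {A, A', C, S} ≥ 4 := by
    have t0 := rk_sm h {A, A', C, S} {A, B, C, A', B', C', X, Y, Z} {A, A', C} {A, B, C, A', B', C', X, Y, Z, S}
    have t1 := rk_mono h {A', A, C} {A, A', C}
    omega
  have gSABB6 : rk {A', B, B', S} ≥ 4 := by
    have t0 := rk_sm h {A', B, B', S} {A, B, C, A', B', C', X, Y, Z} {A', B, B'} {A, B, C, A', B', C', X, Y, Z, S}
    have t1 := rk_mono h {B, A', B'} {A', B, B'}
    omega
  have gSABC7 : rk {A', B, C', S} ≥ 4 := by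
    have t0 := rk_sm h {A', B, C', S} {A, B, C, A', B', C', X, Y, Z} {A', B, C'} {A, B, C, A', B', C', X, Y, Z, S}
    have t1 := rk_mono h {B, A', C'} {A', B, C'}
    omega
  have gSABC5 : rk {A', B, C, S} ≥ 4 := by
    have t0 := rk_sm h {A', B, C, S} {A, B, C, A', B', C', X, Y, Z} {A', B, C} {A, B, C, A', B', C', X, Y, Z, S}
    have t1 := rk_mono h {A', B, C} {A', B, C}
    omega
  have r1 : rk {A, S, B'} ≥ 3 := by
    have t0 := rk_sm h {A, S, B'} {B} ∅ {A, B, B', S}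
    have u := hA4 B
    omega
  have r2 : rk {C, A', S} ≥ 3 := by
    have t0 := rk_sm h {C, A', S} {A} ∅ {A, A', C, S}
    have u := hA4 A
    omega
  have r3 : rk {C', A, S} ≥ 3 := by
    have t0 := rk_sm h {C', A, S} {B'} ∅ {A, B', C', S}
    have u := hA4 B'
    omega
  have r4 : rk {A', S, B} ≥ 3 := by
    have t0 := rk_sm h {A', S, B} {B'} ∅ {A', B, B', S}
    have u := hA4 B'
    omega
  have sAS : rk {A, S} = 2 := by
    have t0 := rk_sm h {A, S} {B'} ∅ {A, S, B'}
    have u := hA4 B'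
    have v := card2 A S
    omega
  have sA2S : rk {A', S} = 2 := by
    have t0 := rk_sm h {A', S} {B} ∅ {A', S, B}
    have u := hA4 B
    have v := card2 A' S
    omega
  obtain ⟨U, hU1, hU2, hU3⟩ := hA7 A' S
  have hU : rk {A, B, C, A', B', C', X, Y, Z, U} ≥ 4 := by
    have t0 := rk_sm h {A, B, C, A', B', C', X, Y, Z, U} {A', S, U} {A', U} {A, B, C, A', B', C', X, Y, Z, S}
    omega
  have sBU : rk {B, U} = 2 := by
    apply hA5
    intro e
    rw [← e] at hU
    have t0 := rk_mono h {A, B, C, A', B', C', X, Y, Z, B} {A, B, C, A', B', C', X, Y, Z}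
    omega
  obtain ⟨W, hW1, hW2⟩ := hA10 A S B' B U (le_antisymm (card3 _ _ _) r1) sBU
  have sBW : rk {B, W} = 2 := by
    apply hA5
    intro e
    rw [← e] at hW1
    have t0 := rk_mono h {A, B, B', S} {A, S, B', B}
    omega
  have BUS : rk {B, U, S} ≥ 3 := by
    have t0 := rk_sm h {B, U, S} {A', S, U} {S, U} {A', S, B}
    omega
  have sSW : rk {S, W} = 2 := by
    apply hA5
    intro e
    rw [← e] at hW2
    omega
  have hW : rk {A, B, C, A', B', C', X, Y, Z, W} ≥ 4 := by
    have t0 := rk_sm h {A, B, C, A', B', C', X, Y, Z, W} {B, U, W} {B, W} {A, B, C, A', B', C', X, Y, Z, U}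
    omega
  have sB2W : rk {B', W} = 2 := by
    apply hA5
    intro e
    rw [← e] at hW
    have t0 := rk_mono h {A, B, C, A', B', C', X, Y, Z, B'} {A, B, C, A', B', C', X, Y, Z}
    omega
  obtain ⟨W2, hV1, hV2⟩ := hA10 C A' S B' W (le_antisymm (card3 _ _ _) r2) sB2W
  obtain ⟨W3, hT1, hT2⟩ := hA10 C' A S B U (le_antisymm (card3 _ _ _) r3) sBU
  have BUC2 : rk {B, U, C'} ≥ 3 := by
    have t0 := rk_sm h {B, U, C'} {A, B, C, A', B', C', X, Y, Z} {B, C'} {A, B, C, A', B', C', X, Y, Z, U}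
    omega
  have B2WC : rk {B', W, C} ≥ 3 := by
    have t0 := rk_sm h {B', W, C} {A, B, C, A', B', C', X, Y, Z} {B', C} {A, B, C, A', B', C', X, Y, Z, W}
    have t1 := rk_mono h {C, B'} {B', C}
    omega
  have sC2W3 : rk {C', W3} = 2 := by
    apply hA5
    intro e
    rw [← e] at hT2
    omega
  have sCW2 : rk {C, W2} = 2 := by
    apply hA5
    intro e
    rw [← e] at hV2
    omega
  have k1 : rk {A, S, B, U} ≥ 4 := by
    have t0 := rk_sm h {A, S, B, U} {A', S, U} {S, U} {A, B, A', S}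
    omega
  have k2 : rk {A, S, A', B'} ≥ 4 := by
    have t0 := rk_mono h {A, A', B', S} {A, S, A', B'}
    omega
  have k3 : rk {B, U, A', B'} ≥ 4 := by
    have t0 := rk_sm h {B, U, A', B'} {A', S, U} {A', U} {A', B, B', S}
    omega
  have PA : rk {A', S, B, U, W} ≤ 3 := by
    have t0 := rk_sm h {A', S, U} {B, U, W} {U} {A', S, B, U, W}
    have u := hA4 U
    omega
  have k4 : rk {A', S, B', W} ≥ 4 := by
    by_contra hc
    have t0 := rk_sm h {A', S, B', W} {A, S, B', W} {S, B', W} {A, A', B', S}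
    have t1 := rk_sm h {S, B', W} {A', S, B, U, W} {S, W} {A', B, B', S}
    omega
  have k5 : rk {A', S, A, B} ≥ 4 := by
    have t0 := rk_mono h {A, B, A', S} {A', S, A, B}
    omega
  have k6 : rk {B', W, A, B} ≥ 4 := by
    have t0 := rk_sm h {B', W, A, B} {A, B, C, A', B', C', X, Y, Z} {B', A, B} {A, B, C, A', B', C', X, Y, Z, W}
    have t1 := rk_mono h {B', A, B} {B', A, B}
    omega
  have k6b : rk {B, B', C, W} ≥ 4 := by
    have t0 := rk_sm h {B, B', C, W} {A, B, C, A', B', C', X, Y, Z} {B, B', C} {A, B, C, A', B', C', X, Y, Z, W}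
    have t1 := rk_mono h {B', B, C} {B, B', C}
    omega
  have four : ∀ p q r s : Pt, 4 ≤ rk {p, q, r, s} → rk {p, q, r, s} = 4 := fun p q r s t => le_antisymm (hA9 _) t
  have hDG' := hDG (A, S) (B, U) (A', B') (A', S) (B', W) (A, B) (C, W2) (C', W3)
    sAS sBU hAB2 sA2S sB2W hAB sCW2 sC2W3
    (four _ _ _ _ k1) (four _ _ _ _ k2) (four _ _ _ _ k3) (four _ _ _ _ k4) (four _ _ _ _ k5) (four _ _ _ _ k6)
    (show rk {A, S, A', S} ≤ 3 from (by have t := rk_mono h {A, S, A', S} {A, S, A'}; have u := card3 A S A'; omega))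
    (show rk {A, S, B', W} ≤ 3 from (by have t := rk_mono h {A, S, B', W} {A, S, B', W}; omega))
    (show rk {A, S, A, B} ≤ 3 from (by have t := rk_mono h {A, S, A, B} {A, S, B}; have u := card3 A S B; omega))
    (show rk {B, U, A', S} ≤ 3 from (by have t := rk_sm h {A', S, U} {B} ∅ {B, U, A', S}; have u := hA4 B; omega))
    (show rk {B, U, B', W} ≤ 3 from (by have t := rk_sm h {B, U, W} {B'} ∅ {B, U, B', W}; have u := hA4 B'; omega))
    (show rk {B, U, A, B} ≤ 3 from (by have t := rk_mono h {B, U, A, B} {B, U, A}; have u := card3 B U A; omega))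
    (show rk {A', B', A', S} ≤ 3 from (by have t := rk_mono h {A', B', A', S} {A', B', S}; have u := card3 A' B' S; omega))
    (show rk {A', B', B', W} ≤ 3 from (by have t := rk_mono h {A', B', B', W} {A', B', W}; have u := card3 A' B' W; omega))
    (show rk {A', B', A, B} ≤ 3 from (by have t := rk_mono h {A', B', A, B} {A, B, C, A', B', C', X, Y, Z}; omega))
    (show rk {C, W2, A', S} ≤ 3 from (by have t := rk_mono h {C, W2, A', S} {C, A', S, W2}; omega))
    (show rk {C, W2, B', W} ≤ 3 from (by have t := rk_sm h {B', W, W2} {C} ∅ {C, W2, B', W}; have u := hA4 C; omega))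
    (show rk {C, W2, A, B} ≤ 3 from (by have t := rk_sm h {A, B, C} {W2} ∅ {C, W2, A, B}; have u := hA4 W2; omega))
    (show rk {C', W3, A, S} ≤ 3 from (by have t := rk_mono h {C', W3, A, S} {C', A, S, W3}; omega))
    (show rk {C', W3, B, U} ≤ 3 from (by have t := rk_sm h {B, U, W3} {C'} ∅ {C', W3, B, U}; have u := hA4 C'; omega))
    (show rk {C', W3, A', B'} ≤ 3 from (by have t := rk_sm h {A', B', C'} {W3} ∅ {C', W3, A', B'}; have u := hA4 W3; omega))
  obtain ⟨N, hN1, hN2⟩ := hA6 C W2 C' W3 hDG'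
  have x1 : rk {A, S, B', W, X} ≤ 3 := by
    have t0 := rk_sm h {A, S, B', W} {A, B', X} {A, B'} {A, S, B', W, X}
    omega
  have x2 : rk {A', S, B, W, X} ≤ 3 := by
    have t0 := rk_sm h {A', S, B, U, W} {A', B, X} {A', B} {A', S, B, W, X}
    have t1 := rk_mono h {B, A'} {A', B}
    omega
  have x3 : rk {S, W, X} ≤ 2 := by
    have t0 := rk_sm h {A, S, B', W, X} {A', S, B, W, X} {S, W, X} {A, B, A', S}
    omega
  have y1 : rk {C', A, S, W3, N} ≤ 3 := by
    have t0 := rk_sm h {C', A, S, W3} {C', W3, N} {C', W3} {C', A, S, W3, N}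
    omega
  have y2 : rk {C', A, S, N, Y} ≤ 3 := by
    have t0 := rk_sm h {C', A, S, W3, N} {A, C', Y} {A, C'} {C', A, S, N, Y}
    omega
  have y3 : rk {C, A', S, W2, N} ≤ 3 := by
    have t0 := rk_sm h {C, A', S, W2} {C, W2, N} {C, W2} {C, A', S, W2, N}
    omega
  have y4 : rk {C, A', S, N, Y} ≤ 3 := by
    have t0 := rk_sm h {C, A', S, W2, N} {A', C, Y} {A', C} {C, A', S, N, Y}
    have t1 := rk_mono h {C, A'} {A', C}
    omega
  have y5 : rk {S, N, Y} ≤ 2 := by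
    have t0 := rk_sm h {C', A, S, N, Y} {C, A', S, N, Y} {S, N, Y} {A, A', C, S}
    omega
  have z1 : rk {B, U, W, W3} ≤ 2 := by
    have t0 := rk_sm h {B, U, W} {B, U, W3} {B, U} {B, U, W, W3}
    omega
  have z2 : rk {B, U, W, W3, C', N} ≤ 3 := by
    have t0 := rk_sm h {B, U, W, W3} {C', W3, N} {W3} {B, U, W, W3, C', N}
    have u := hA4 W3
    omega
  have z3 : rk {B, W, C', N, Z} ≤ 3 := by
    have t0 := rk_sm h {B, U, W, W3, C', N} {B, C', Z} {B, C'} {B, W, C', N, Z}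
    omega
  have z4 : rk {B', W, W2, C, N} ≤ 3 := by
    have t0 := rk_sm h {B', W, W2} {C, W2, N} {W2} {B', W, W2, C, N}
    have u := hA4 W2
    omega
  have z5 : rk {B', W, C, N, Z} ≤ 3 := by
    have t0 := rk_sm h {B', W, W2, C, N} {B', C, Z} {B', C} {B', W, C, N, Z}
    have t1 := rk_mono h {C, B'} {B', C}
    omega
  have z6 : rk {W, N, Z} ≤ 2 := by
    have t0 := rk_sm h {B, W, C', N, Z} {B', W, C, N, Z} {W, N, Z} {B, B', C, W}
    omega
  have sSW3 : rk {S, W3} = 2 := by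
    apply hA5
    intro e
    rw [← e] at hT2
    omega
  have sSN : rk {S, N} = 2 := by
    apply hA5
    intro e
    rw [← e] at hN2
    have t0 := rk_sm h {A', S, U} {B, U, W3} {U} {A', S, B, W3}
    have u := hA4 U
    have t2 := rk_sm h {A', S, B, W3} {C', W3, S} {S, W3} {A', B, C', S}
    omega
  have sWW3 : rk {W, W3} = 2 := by
    apply hA5
    intro e
    rw [← e] at hT1
    have t0 := rk_sm h {A, S, B', W} {C', A, S, W} {A, S, W} {A, B', C', S}
    have t1 := rk_sm h {A, S, W} {B, U, W} {W} {A, S, B, U}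
    have u := hA4 W
    omega
  have sWN : rk {W, N} = 2 := by
    apply hA5
    intro e
    rw [← e] at hN2
    have t0 := rk_sm h {B, U, W, W3} {C', W3, W} {W, W3} {B, U, C'}
    omega
  have f1 : rk {S, W, N, X} ≤ 3 := by
    have t0 := rk_sm h {S, W, N} {S, W, X} {S, W} {S, W, N, X}
    have u := card3 S W N
    omega
  have f2 : rk {S, W, N, X, Y} ≤ 3 := by
    have t0 := rk_sm h {S, W, N, X} {S, N, Y} {S, N} {S, W, N, X, Y}
    omega
  have f3 : rk {S, W, N, X, Y, Z} ≤ 3 := by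
    have t0 := rk_sm h {S, W, N, X, Y} {W, N, Z} {W, N} {S, W, N, X, Y, Z}
    omega
  have f4 : rk {X, Y, Z} ≤ 2 := by
    have t0 := rk_sm h {S, W, N, X, Y, Z} {A, B, C, A', B', C', X, Y, Z} {X, Y, Z} {A, B, C, A', B', C', X, Y, Z, S}
    omega
  omega
end
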